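/- arXiv:2508.04209 — 2 statements merged into one kernel-verified Lean document; each statement's English description precedes it below -/
import Mathlib

section
/- Let k ≥ 1 and let G = (V,E) be a finite simple graph with |V| ≥ k. Then ∑_{i=1}^{k} λ_i(L(G)) ≤ |E| + k². -/
open Finset

/-- The `i`-th largest entry (1-indexed, so `i = 1` gives the maximum) of a tuple
`f : Fin n → ℝ`, counted with multiplicity. Junk value `0` outside the range `1 ≤ i ≤ n`. -/
noncomputable def ithLargest {n : ℕ} (f : Fin n → ℝ) (i : ℕ) : ℝ :=
  if h : 1 ≤ i ∧ i ≤ n then f (Tuple.sort f (Fin.rev ⟨i - 1, by omega⟩)) else 0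

/-- The eigenvalues of the Laplacian matrix of a finite simple graph `G`
(as a tuple indexed by the vertices, with multiplicity). -/
noncomputable def lapEigs {n : ℕ} (G : SimpleGraph (Fin n)) [DecidableRel G.Adj] :
    Fin n → ℝ :=
  (SimpleGraph.posSemidef_lapMatrix ℝ G).isHermitian.eigenvalues

/-- The degree sequence of `G`, as a real-valued tuple indexed by the vertices. -/
noncomputable def degTuple {n : ℕ} (G : SimpleGraph (Fin n)) [DecidableRel G.Adj] :
    Fin n → ℝ :=
  fun v => (G.degree v : ℝ)

/-!
A sum of `k` Laplacian eigenvalues is `trace (L * P)` for the orthogonal projection `P` onto the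
span of `k` eigenvectors, and `2 * trace (L * P)` is the sum of `P u u + P v v - 2 * P u v` over
ordered pairs of adjacent vertices. So it suffices to bound the sum of the excesses
`P u u + P v v - 1 - 2 * P u v`. With `a = P u u`, `b = P v v`, `g = P u v`, AM-GM gives
`a + b - 1 - 2 * g ≤ 4 / 3 * a * b + g ^ 2 * (w a + w b)` for the weight
`w a = 2 / 3 * (1 + a) / (1 - a)`. The right-hand side is nonnegative, so we may sum it over all
`u ≠ v`; because row `u` of `P` has squared norm `P u u`, the sum is at most `4 / 3 * k * (k + 1)`.
Hence `trace (L * P) ≤ |E| + 2 / 3 * k * (k + 1)`, which is at most `|E| + k ^ 2` unless `k = 1`.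
A single eigenvalue is at most `|E| + 1` by the Anderson–Morley bound `max (deg u + deg v)` over
edges `uv`.
-/

section SpectralProjection

variable {ι 𝕜 : Type*} [Fintype ι] [DecidableEq ι] [RCLike 𝕜] {A : Matrix ι ι 𝕜}

/-- The orthogonal projection onto the span of the eigenvectors of a Hermitian matrix indexed by
`s`. It turns the sum of the eigenvalues indexed by `s` into a trace. -/
noncomputable def spectralProjection (hA : A.IsHermitian) (s : Finset ι) : Matrix ι ι 𝕜 :=
  Unitary.conjStarAlgAut 𝕜 _ hA.eigenvectorUnitary
    (Matrix.diagonal fun i => if i ∈ s then 1 else 0)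

variable (hA : A.IsHermitian) (s : Finset ι)

theorem isStarProjection_spectralProjection : IsStarProjection (spectralProjection hA s) := by
  refine IsStarProjection.map ⟨?_, ?_⟩ (Unitary.conjStarAlgAut 𝕜 _ hA.eigenvectorUnitary)
  · simp [IsIdempotentElem]
  · exact Matrix.isHermitian_diagonal_iff.2 fun i => by split_ifs <;> simp

theorem trace_spectralProjection : (spectralProjection hA s).trace = #s := by
  simp [spectralProjection, -Unitary.conjStarAlgAut_apply]

theorem trace_mul_spectralProjection :
    (A * spectralProjection hA s).trace = ∑ i ∈ s, (hA.eigenvalues i : 𝕜) := by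
  have h_conj : A * spectralProjection hA s = Unitary.conjStarAlgAut 𝕜 _ hA.eigenvectorUnitary
      (Matrix.diagonal (RCLike.ofReal ∘ hA.eigenvalues) *
        Matrix.diagonal fun i => if i ∈ s then 1 else 0) := by
    rw [map_mul, ← hA.spectral_theorem, spectralProjection]
  simp [h_conj, -Unitary.conjStarAlgAut_apply]

end SpectralProjection

section RealProjection

variable {V : Type*} [Fintype V] {P : Matrix V V ℝ}

theorem isSymm_of_isStarProjection (hP : IsStarProjection P) : P.IsSymm := by
  rw [Matrix.IsSymm, ← Matrix.conjTranspose_eq_transpose_of_trivial]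
  exact hP.isSelfAdjoint

theorem sum_sq_apply_eq_diag (hP : IsStarProjection P) (u : V) : ∑ v, P u v ^ 2 = P u u := by
  conv_rhs => rw [← hP.isIdempotentElem.eq, Matrix.mul_apply]
  exact sum_congr rfl fun v _ => by rw [sq, (isSymm_of_isStarProjection hP).apply]

theorem diag_nonneg_of_isStarProjection (hP : IsStarProjection P) (u : V) : 0 ≤ P u u := by
  rw [← sum_sq_apply_eq_diag hP u]
  exact sum_nonneg fun _ _ => sq_nonneg _

theorem sum_erase_sq_apply_eq [DecidableEq V] (hP : IsStarProjection P) (u : V) :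
    ∑ v ∈ univ.erase u, P u v ^ 2 = P u u - P u u ^ 2 := by
  rw [sum_erase_eq_sub (mem_univ u), sum_sq_apply_eq_diag hP]

theorem diag_sq_add_sq_apply_le_diag (hP : IsStarProjection P) {u v : V} (huv : u ≠ v) :
    P u u ^ 2 + P u v ^ 2 ≤ P u u := by
  classical
  have h_single : P u v ^ 2 ≤ ∑ w ∈ univ.erase u, P u w ^ 2 :=
    single_le_sum (f := (P u · ^ 2)) (fun _ _ => sq_nonneg _) (by simp [huv.symm])
  linarith [sum_erase_sq_apply_eq hP u]

theorem diag_le_one_of_isStarProjection (hP : IsStarProjection P) (u : V) : P u u ≤ 1 := by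
  have h_single : P u u ^ 2 ≤ ∑ v, P u v ^ 2 :=
    single_le_sum (f := (P u · ^ 2)) (fun _ _ => sq_nonneg _) (mem_univ u)
  nlinarith [sum_sq_apply_eq_diag hP u]

end RealProjection

section ExcessWeight

/-- The weight `w` of the squared off-diagonal entries in the bound for the excess of an edge. It is
chosen so that `w a * (a - a ^ 2) = 2 / 3 * (a + a ^ 2)`; at `a = 1` it has the junk value `0`,
which is harmless because an orthogonal projection with a diagonal entry `1` vanishes on the rest of
that row. -/
noncomputable def excessWeight (a : ℝ) : ℝ := 2 / 3 * (1 + a) / (1 - a)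

variable {a b g : ℝ}

theorem excessWeight_nonneg (ha₀ : 0 ≤ a) (ha₁ : a ≤ 1) : 0 ≤ excessWeight a :=
  div_nonneg (by linarith) (by linarith)

theorem excessWeight_mul_sub_sq_le (a : ℝ) :
    excessWeight a * (a - a ^ 2) ≤ 2 / 3 * (a + a ^ 2) := by
  rcases eq_or_ne a 1 with rfl | ha₁
  · norm_num
  · have h_sub : 1 - a ≠ 0 := sub_ne_zero.2 ha₁.symm
    rw [excessWeight]
    field_simp
    linarith

theorem excessWeight_add (ha : a ≠ 1) (hb : b ≠ 1) :
    excessWeight a + excessWeight b = 4 / 3 * (1 - a * b) / ((1 - a) * (1 - b)) := by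
  have ha' : 1 - a ≠ 0 := sub_ne_zero.2 ha.symm
  have hb' : 1 - b ≠ 0 := sub_ne_zero.2 hb.symm
  rw [excessWeight, excessWeight]
  field_simp
  ring

theorem nine_mul_one_sub_mul_one_sub_le (ha₀ : 0 ≤ a) (ha₁ : a ≤ 1) (hb₀ : 0 ≤ b) (hb₁ : b ≤ 1) :
    9 * ((1 - a) * (1 - b)) ≤ 4 * (1 - a * b) * (a * b + 3 * ((1 - a) * (1 - b))) := by
  have hq₀ : 0 ≤ a * b := mul_nonneg ha₀ hb₀
  have hq₁ : a * b ≤ 1 := mul_le_one₀ ha₁ hb₀ hb₁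
  have hp₀ : 0 ≤ (1 - a) * (1 - b) := mul_nonneg (by linarith) (by linarith)
  have hp₁ : (1 - a) * (1 - b) ≤ (1 - a * b) ^ 2 := by
    rw [sq]
    exact mul_le_mul (by nlinarith) (by nlinarith) (by linarith) (by linarith)
  generalize a * b = q at *
  generalize (1 - a) * (1 - b) = p at *
  rcases le_total (4 * q) 1 with hq | hq
  · nlinarith [mul_nonneg hp₀ (sub_nonneg.2 hq), mul_nonneg hq₀ (sub_nonneg.2 hq₁)]
  · have h_quad : 0 ≤ (1 - q) * (12 * q ^ 2 - 11 * q + 3) :=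
      mul_nonneg (by linarith) (by nlinarith [sq_nonneg (24 * q - 11)])
    nlinarith [mul_le_mul_of_nonneg_right hp₁ (sub_nonneg.2 hq)]

theorem neg_two_mul_le_mul_sq_add {w c : ℝ} (g : ℝ) (hw : 0 < w) (hwc : 1 ≤ w * c) :
    -2 * g ≤ g ^ 2 * w + c := by
  refine le_of_mul_le_mul_left ?_ hw
  nlinarith [sq_nonneg (w * g + 1)]

theorem excess_le (ha : a ^ 2 + g ^ 2 ≤ a) (hb : b ^ 2 + g ^ 2 ≤ b) :
    a + b - 1 - 2 * g ≤ 4 / 3 * (a * b) + g ^ 2 * (excessWeight a + excessWeight b) := by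
  have ha₀ : 0 ≤ a := by nlinarith
  have hb₀ : 0 ≤ b := by nlinarith
  have ha₁ : a ≤ 1 := by nlinarith
  have hb₁ : b ≤ 1 := by nlinarith
  rcases ha₁.eq_or_lt with rfl | ha₁
  · obtain rfl : g = 0 := by nlinarith
    linarith
  rcases hb₁.eq_or_lt with rfl | hb₁
  · obtain rfl : g = 0 := by nlinarith
    linarith
  have hp : 0 < (1 - a) * (1 - b) := mul_pos (by linarith) (by linarith)
  have hq : a * b < 1 := by nlinarith
  have h_weight : 1 ≤ (excessWeight a + excessWeight b) *
      (a * b / 3 + (1 - a) * (1 - b)) := by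
    rw [excessWeight_add ha₁.ne hb₁.ne, div_mul_eq_mul_div, one_le_div hp]
    linarith [nine_mul_one_sub_mul_one_sub_le ha₀ ha₁.le hb₀ hb₁.le]
  have h_pos : 0 < excessWeight a + excessWeight b := by
    rw [excessWeight_add ha₁.ne hb₁.ne]
    exact div_pos (by linarith) hp
  linarith [neg_two_mul_le_mul_sq_add g h_pos h_weight]

end ExcessWeight

section Graph

open scoped Matrix

variable {V : Type*} [Fintype V] (G : SimpleGraph V) [DecidableRel G.Adj]

theorem sum_sum_neighborFinset_comm {M : Type*} [AddCommMonoid M] (f : V → V → M) :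
    ∑ u, ∑ v ∈ G.neighborFinset u, f u v = ∑ u, ∑ v ∈ G.neighborFinset u, f v u :=
  sum_comm' (by simp [G.adj_comm])

variable [DecidableEq V]

theorem lapMatrix_mulVec_apply_eq_sum {R : Type*} [NonAssocRing R] (x : V → R) (u : V) :
    (G.lapMatrix R *ᵥ x) u = ∑ v ∈ G.neighborFinset u, (x u - x v) := by
  simp [SimpleGraph.lapMatrix_mulVec_apply]

theorem two_mul_trace_lapMatrix_mul {R : Type*} [CommRing R] {P : Matrix V V R} (hP : P.IsSymm) :
    2 * (G.lapMatrix R * P).trace =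
      ∑ u, ∑ v ∈ G.neighborFinset u, (P u u + P v v - 2 * P u v) := by
  have h_trace : (G.lapMatrix R * P).trace =
      ∑ u, ∑ v ∈ G.neighborFinset u, (P u u - P u v) := by
    refine sum_congr rfl fun u _ => ?_
    simp_rw [← hP.apply u]
    exact lapMatrix_mulVec_apply_eq_sum G (P.col u) u
  calc 2 * (G.lapMatrix R * P).trace
      = ∑ u, ∑ v ∈ G.neighborFinset u, (P u u - P u v) +
          ∑ u, ∑ v ∈ G.neighborFinset u, (P v v - P v u) := by
        rw [← sum_sum_neighborFinset_comm G fun u v => P u u - P u v, h_trace, two_mul]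
    _ = ∑ u, ∑ v ∈ G.neighborFinset u, (P u u + P v v - 2 * P u v) := by
        simp_rw [← sum_add_distrib]
        refine sum_congr rfl fun u _ => sum_congr rfl fun v _ => ?_
        rw [hP.apply u v]
        ring

theorem two_mul_dotProduct_lapMatrix_mulVec {R : Type*} [CommRing R] (x : V → R) :
    2 * (x ⬝ᵥ (G.lapMatrix R *ᵥ x)) = ∑ u, ∑ v ∈ G.neighborFinset u, (x u - x v) ^ 2 := by
  have h_symm : (Matrix.vecMulVec x x).IsSymm := Matrix.IsSymm.ext fun u v => mul_comm _ _
  rw [dotProduct_comm, ← Matrix.trace_vecMulVec, ← Matrix.mul_vecMulVec,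
    two_mul_trace_lapMatrix_mul G h_symm]
  refine sum_congr rfl fun u _ => sum_congr rfl fun v _ => ?_
  simp only [Matrix.vecMulVec_apply]
  ring

end Graph

section AndersonMorley

open scoped Matrix

variable {V : Type*} [Fintype V] (G : SimpleGraph V) [DecidableRel G.Adj]

theorem degree_add_degree_le_card_edgeFinset_add_one {u v : V} (huv : G.Adj u v) :
    G.degree u + G.degree v ≤ #G.edgeFinset + 1 := by
  classical
  have h_union : #(G.incidenceFinset u ∪ G.incidenceFinset v) ≤ #G.edgeFinset :=
    card_le_card (union_subset (G.incidenceFinset_subset u) (G.incidenceFinset_subset v))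
  have h_inter : #(G.incidenceFinset u ∩ G.incidenceFinset v) ≤ 1 := by
    rw [← card_singleton s(u, v)]
    refine card_le_card fun e he => ?_
    rw [mem_inter, G.mem_incidenceFinset, G.mem_incidenceFinset] at he
    simpa using G.incidenceSet_inter_incidenceSet_subset huv.ne he
  have h_card := card_union_add_card_inter (G.incidenceFinset u) (G.incidenceFinset v)
  rw [G.card_incidenceFinset_eq_degree, G.card_incidenceFinset_eq_degree] at h_card
  omega

variable [DecidableEq V] {G} {d : ℝ}

theorem lapMatrix_mulVec_dotProduct_self_le (hd : ∀ u v, G.Adj u v → G.degree u + G.degree v ≤ d)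
    (x : V → ℝ) :
    (G.lapMatrix ℝ *ᵥ x) ⬝ᵥ (G.lapMatrix ℝ *ᵥ x) ≤ d * (x ⬝ᵥ (G.lapMatrix ℝ *ᵥ x)) := by
  have h_cauchy : (G.lapMatrix ℝ *ᵥ x) ⬝ᵥ (G.lapMatrix ℝ *ᵥ x) ≤
      ∑ u, ∑ v ∈ G.neighborFinset u, G.degree u * (x u - x v) ^ 2 := by
    refine sum_le_sum fun u _ => ?_
    rw [← sq, lapMatrix_mulVec_apply_eq_sum, ← mul_sum, ← G.card_neighborFinset_eq_degree]
    exact sq_sum_le_card_mul_sum_sq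
  have h_edges : ∑ u, ∑ v ∈ G.neighborFinset u, (G.degree u + G.degree v) * (x u - x v) ^ 2 ≤
      d * ∑ u, ∑ v ∈ G.neighborFinset u, (x u - x v) ^ 2 := by
    simp_rw [mul_sum]
    gcongr with u _ v huv
    exact hd u v ((G.mem_neighborFinset u v).1 huv)
  have h_symm : ∑ u, ∑ v ∈ G.neighborFinset u, (G.degree u : ℝ) * (x u - x v) ^ 2 =
      ∑ u, ∑ v ∈ G.neighborFinset u, (G.degree v : ℝ) * (x u - x v) ^ 2 := by
    rw [sum_sum_neighborFinset_comm]
    simp_rw [sub_sq_comm]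
  simp_rw [add_mul, sum_add_distrib, ← h_symm, ← two_mul_dotProduct_lapMatrix_mulVec] at h_edges
  linarith

theorem lapMatrix_eigenvalues_le (hd₀ : 0 ≤ d)
    (hd : ∀ u v, G.Adj u v → G.degree u + G.degree v ≤ d) (i : V) :
    (G.isHermitian_lapMatrix ℝ).eigenvalues i ≤ d := by
  set μ := (G.isHermitian_lapMatrix ℝ).eigenvalues i
  set x : V → ℝ := ⇑((G.isHermitian_lapMatrix ℝ).eigenvectorBasis i)
  have hx : G.lapMatrix ℝ *ᵥ x = μ • x :=
    (G.isHermitian_lapMatrix ℝ).mulVec_eigenvectorBasis i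
  have hx_norm : x ⬝ᵥ x = 1 := by
    rw [← (G.isHermitian_lapMatrix ℝ).eigenvectorBasis.inner_eq_one i,
      EuclideanSpace.inner_eq_star_dotProduct, star_trivial]
  have h_sq : μ ^ 2 ≤ d * μ := by
    simpa [hx, hx_norm, sq] using lapMatrix_mulVec_dotProduct_self_le hd x
  nlinarith

end AndersonMorley

section TraceBound

variable {V : Type*} [Fintype V]

theorem sum_sum_erase_diag_mul_diag [DecidableEq V] {R : Type*} [CommRing R] (P : Matrix V V R) :
    ∑ u, ∑ v ∈ univ.erase u, P u u * P v v = P.trace ^ 2 - ∑ u, P u u ^ 2 := by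
  simp_rw [← mul_sum, sum_erase_eq_sub (mem_univ _), mul_sub, sum_sub_distrib, ← sum_mul, ← sq]
  rfl

variable {P : Matrix V V ℝ}

theorem sum_sum_erase_sq_mul_excessWeight_le [DecidableEq V] (hP : IsStarProjection P) :
    ∑ u, ∑ v ∈ univ.erase u, P u v ^ 2 * (excessWeight (P u u) + excessWeight (P v v)) ≤
      4 / 3 * (P.trace + ∑ u, P u u ^ 2) := by
  have h_swap : ∑ u, ∑ v ∈ univ.erase u, P u v ^ 2 * excessWeight (P v v) =
      ∑ u, ∑ v ∈ univ.erase u, P u v ^ 2 * excessWeight (P u u) := by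
    rw [sum_comm' (t' := univ) (s' := fun v => univ.erase v) (by simp [eq_comm])]
    simp_rw [(isSymm_of_isStarProjection hP).apply]
  have h_row (u : V) : ∑ v ∈ univ.erase u, P u v ^ 2 * excessWeight (P u u) ≤
      2 / 3 * (P u u + P u u ^ 2) := by
    rw [← sum_mul, sum_erase_sq_apply_eq hP, mul_comm]
    exact excessWeight_mul_sub_sq_le _
  calc ∑ u, ∑ v ∈ univ.erase u, P u v ^ 2 * (excessWeight (P u u) + excessWeight (P v v))
      = 2 * ∑ u, ∑ v ∈ univ.erase u, P u v ^ 2 * excessWeight (P u u) := by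
        simp_rw [mul_add, sum_add_distrib, h_swap, two_mul]
    _ ≤ 2 * ∑ u, 2 / 3 * (P u u + P u u ^ 2) := by
        gcongr with u
        exact h_row u
    _ = 4 / 3 * (P.trace + ∑ u, P u u ^ 2) := by
        rw [← mul_sum, sum_add_distrib, Matrix.trace]
        simp only [Matrix.diag_apply]
        ring

variable (G : SimpleGraph V) [DecidableRel G.Adj]

theorem sum_excess_le (hP : IsStarProjection P) :
    ∑ u, ∑ v ∈ G.neighborFinset u, (P u u + P v v - 1 - 2 * P u v) ≤
      4 / 3 * P.trace * (P.trace + 1) := by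
  classical
  have h_diag_nonneg (u : V) : 0 ≤ P u u := diag_nonneg_of_isStarProjection hP u
  have h_weight_nonneg (u : V) : 0 ≤ excessWeight (P u u) :=
    excessWeight_nonneg (h_diag_nonneg u) (diag_le_one_of_isStarProjection hP u)
  calc ∑ u, ∑ v ∈ G.neighborFinset u, (P u u + P v v - 1 - 2 * P u v)
      ≤ ∑ u, ∑ v ∈ G.neighborFinset u, (4 / 3 * (P u u * P v v) +
          P u v ^ 2 * (excessWeight (P u u) + excessWeight (P v v))) := by
        gcongr with u _ v huv
        have h_ne : u ≠ v := ((G.mem_neighborFinset u v).1 huv).ne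
        refine excess_le (diag_sq_add_sq_apply_le_diag hP h_ne) ?_
        rw [← (isSymm_of_isStarProjection hP).apply u v]
        exact diag_sq_add_sq_apply_le_diag hP h_ne.symm
    _ ≤ ∑ u, ∑ v ∈ univ.erase u, (4 / 3 * (P u u * P v v) +
          P u v ^ 2 * (excessWeight (P u u) + excessWeight (P v v))) := by
        refine sum_le_sum fun u _ => sum_le_sum_of_subset_of_nonneg ?_ fun v _ _ => ?_
        · exact fun v huv => by simpa using ((G.mem_neighborFinset u v).1 huv).ne'
        · have := h_diag_nonneg u
          have := h_diag_nonneg v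
          have := h_weight_nonneg u
          have := h_weight_nonneg v
          positivity
    _ ≤ 4 / 3 * (P.trace ^ 2 - ∑ u, P u u ^ 2) + 4 / 3 * (P.trace + ∑ u, P u u ^ 2) := by
        simp_rw [sum_add_distrib, ← mul_sum, ← sum_sum_erase_diag_mul_diag, mul_sum]
        gcongr
        exact sum_sum_erase_sq_mul_excessWeight_le hP
    _ = 4 / 3 * P.trace * (P.trace + 1) := by ring

variable [DecidableEq V]

theorem trace_lapMatrix_mul_le (hP : IsStarProjection P) :
    (G.lapMatrix ℝ * P).trace ≤ #G.edgeFinset + 2 / 3 * P.trace * (P.trace + 1) := by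
  have h_edges : ∑ u, ∑ _v ∈ G.neighborFinset u, (1 : ℝ) = 2 * #G.edgeFinset := by
    simpa using congrArg (Nat.cast (R := ℝ)) G.sum_degrees_eq_twice_card_edges
  have h_excess : ∑ u, ∑ v ∈ G.neighborFinset u, (P u u + P v v - 1 - 2 * P u v) =
      2 * (G.lapMatrix ℝ * P).trace - 2 * #G.edgeFinset := by
    rw [two_mul_trace_lapMatrix_mul G (isSymm_of_isStarProjection hP), ← h_edges]
    simp_rw [← sum_sub_distrib, sub_right_comm]
  linarith [sum_excess_le G hP]

theorem sum_lapMatrix_eigenvalues_le (s : Finset V) :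
    ∑ i ∈ s, (G.isHermitian_lapMatrix ℝ).eigenvalues i ≤
      #G.edgeFinset + 2 / 3 * (#s : ℝ) * (#s + 1) := by
  have hG := G.isHermitian_lapMatrix ℝ
  simpa [trace_spectralProjection, trace_mul_spectralProjection] using
    trace_lapMatrix_mul_le G (isStarProjection_spectralProjection hG s)

theorem sum_lapEigs_le_card_edges_add_k_sq_general (s : Finset V) :
    ∑ i ∈ s, (G.isHermitian_lapMatrix ℝ).eigenvalues i ≤ #G.edgeFinset + (#s : ℝ) ^ 2 := by
  rcases eq_or_ne #s 1 with hs | hs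
  · obtain ⟨i, rfl⟩ := card_eq_one.1 hs
    simpa using lapMatrix_eigenvalues_le (d := #G.edgeFinset + 1) (by positivity)
      (fun u v huv => mod_cast degree_add_degree_le_card_edgeFinset_add_one G huv) i
  · have h_card : 2 / 3 * (#s : ℝ) * (#s + 1) ≤ (#s : ℝ) ^ 2 := by
      rcases Nat.eq_zero_or_pos #s with h_zero | h_pos
      · simp [h_zero]
      · have h_two : (2 : ℝ) ≤ #s := mod_cast (show 2 ≤ #s by omega)
        nlinarith
    linarith [sum_lapMatrix_eigenvalues_le G s]

end TraceBound

theorem exists_finset_card_eq_sum_ithLargest_eq {n k : ℕ} (f : Fin n → ℝ) (hk : k ≤ n) :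
    ∃ s : Finset (Fin n), #s = k ∧ ∑ i ∈ Icc 1 k, ithLargest f i = ∑ j ∈ s, f j := by
  let e : Fin k ↪ Fin n :=
    ((Fin.castLEEmb hk).trans Fin.revPerm.toEmbedding).trans (Tuple.sort f).toEmbedding
  refine ⟨univ.map e, by simp, ?_⟩
  rw [sum_map, ← Ico_add_one_right_eq_Icc, sum_Ico_eq_sum_range, Nat.add_sub_cancel, sum_range]
  refine sum_congr rfl fun i _ => ?_
  have hi : 1 ≤ 1 + (i : ℕ) ∧ 1 + (i : ℕ) ≤ n := by omega
  rw [ithLargest, dif_pos hi]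
  simp [e, Fin.castLE]

/-- for `k ≥ 1` and a finite simple graph `G = (V,E)` with `|V| ≥ k`,
`∑_{i=1}^k λ_i(L(G)) ≤ |E| + k²`. -/
theorem sum_lapEigs_le_card_edges_add_k_sq {n : ℕ} (G : SimpleGraph (Fin n))
    [DecidableRel G.Adj] (k : ℕ) (hk1 : 1 ≤ k) (hk2 : k ≤ n) :
    ∑ i ∈ Finset.Icc 1 k, ithLargest (lapEigs G) i ≤
      (G.edgeFinset.card : ℝ) + (k : ℝ) ^ 2 := by
  obtain ⟨s, hs_card, hs_sum⟩ := exists_finset_card_eq_sum_ithLargest_eq (lapEigs G) hk2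
  rw [hs_sum, ← hs_card]
  exact sum_lapEigs_le_card_edges_add_k_sq_general G s
end

section
/- Let G = (V,E) be a finite simple graph with |V| = n, and let k be an integer with 1 ≤ k ≤ (n−1)/2. Then ∑_{i=1}^{k} λ_i(L(G)) ≤ |E| + (1/2)( ∑_{i=1}^{2k} min{d_i(G), k} − ∑_{i=2k+1}^{n} max{0, d_i(G) − k} ). -/
/-!
Twice the right-hand side is `∑_{i ≤ 2k} d_i + ∑_i min(d_i, k)`, and each of these two sums bounds
the sum of the `k` largest Laplacian eigenvalues.

For the first sum, let `x` be a unit eigenvector for the eigenvalue `c`. Applying Cauchy–Schwarz at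
every vertex to `c x_u = ∑_{v ∼ u} (x_u - x_v)` gives `∑_u c x_u² / d_u ≤ 2`. Summing over the `k`
eigenvectors writes `∑ λ_i` as `∑_u t_u d_u` with `0 ≤ t_u ≤ 1` and `∑_u t_u ≤ 2k`, which is largest
when `t` is concentrated on the `2k` largest degrees.

The second sum is the bound of Grone–Merris and Bai. It suffices to bound `tr(P L)` for
`0 ≤ P ≤ 1` of trace `k`. Completing the vertices of degree at least `k` to a clique and discarding
the edges between the other ones reduces this to split graphs with weights in `(0, 1)`. Let the
clique have `m` vertices. If exactly `m` eigenvalues are at least `m`, then power iteration from the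
coordinate subspace of the clique converges to their eigenspace, and every iterate is the graph of
`-W` with `W` nonnegative and column sums at most `1`. So the `m` top eigenvalues are those of an
`m × m` matrix whose trace is explicit in terms of `W`. Otherwise, a dimension count shows that the
complementary split graph is in that case, and the bound is invariant under complementation.
-/

open Finset

section Loewner

open Matrix
open scoped MatrixOrder Matrix.Norms.L2Operator

variable {ι κ : Type*}

theorem trace_mul_nonneg [Fintype ι] {P X : Matrix ι ι ℝ} (hP : 0 ≤ P) (hX : 0 ≤ X) :
    0 ≤ (P * X).trace := by
  classical
  obtain ⟨B, rfl⟩ := CStarAlgebra.nonneg_iff_eq_star_mul_self.mp hP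
  rw [Matrix.mul_assoc, trace_mul_comm]
  exact (hX.posSemidef.mul_mul_conjTranspose_same B).trace_nonneg

theorem trace_mul_le_trace_mul [Fintype ι] {P X Y : Matrix ι ι ℝ} (hP : 0 ≤ P)
    (hXY : X ≤ Y) : (P * X).trace ≤ (P * Y).trace := by
  have h := trace_mul_nonneg hP (sub_nonneg.2 hXY)
  rwa [Matrix.mul_sub, trace_sub, sub_nonneg] at h

theorem trace_mul_le_trace [Fintype ι] [DecidableEq ι] {P X : Matrix ι ι ℝ} (hP : P ≤ 1)
    (hX : 0 ≤ X) : (P * X).trace ≤ X.trace := by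
  have h := trace_mul_le_trace_mul hX hP
  rwa [Matrix.mul_one, trace_mul_comm] at h

theorem trace_submatrix_equiv [Fintype ι] [Fintype κ] (M : Matrix ι ι ℝ) (e : κ ≃ ι) :
    (M.submatrix e e).trace = M.trace :=
  e.sum_comp M.diag

theorem submatrix_equiv_mem_Icc [DecidableEq ι] [DecidableEq κ] {P : Matrix ι ι ℝ}
    (hP : P ∈ Set.Icc 0 1) (e : κ ≃ ι) : P.submatrix e e ∈ Set.Icc 0 1 := by
  refine ⟨(hP.1.posSemidef.submatrix e).nonneg, Matrix.le_iff.2 ?_⟩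
  simpa only [submatrix_sub, Pi.sub_apply, submatrix_one_equiv]
    using (Matrix.le_iff.1 hP.2).submatrix e

theorem conj_mem_Icc_of_isStarProjection [Fintype ι] [DecidableEq ι] {P S : Matrix ι ι ℝ}
    (hP : P ∈ Set.Icc 0 1) (hS : IsStarProjection S) : S * P * S ∈ Set.Icc 0 1 := by
  refine ⟨hS.isSelfAdjoint.conjugate_nonneg hP.1,
    (hS.isSelfAdjoint.conjugate_le_conjugate hP.2).trans ?_⟩
  rw [Matrix.mul_one, hS.isIdempotentElem]
  exact hS.le_one

end Loewner

section Spectral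

open Matrix
open scoped MatrixOrder

variable {ι : Type*} [Fintype ι] [DecidableEq ι]

/-- `M = Φ diag(μ) Φᵀ` with `Φ` orthogonal, so the `i`-th column of `Φ` is a unit eigenvector of
the real symmetric matrix `M` for the eigenvalue `μ i`. The eigenvalues come in no particular
order, and the same `Φ` may diagonalise several matrices. -/
structure IsSpectralDecomp (M Φ : Matrix ι ι ℝ) (μ : ι → ℝ) : Prop where
  transpose_mul_self : Φᵀ * Φ = 1
  eq_mul_mul_transpose : M = Φ * diagonal μ * Φᵀ

theorem isSpectralDecomp_eigenvectorUnitary {M : Matrix ι ι ℝ} (hM : M.IsHermitian) :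
    IsSpectralDecomp M (hM.eigenvectorUnitary : Matrix ι ι ℝ) hM.eigenvalues where
  transpose_mul_self := Unitary.coe_star_mul_self hM.eigenvectorUnitary
  eq_mul_mul_transpose := by
    simpa [Unitary.conjStarAlgAut_apply, Function.comp_def, star_eq_conjTranspose]
      using hM.spectral_theorem

namespace IsSpectralDecomp

variable {M N Φ : Matrix ι ι ℝ} {μ ν : ι → ℝ}

theorem mul_transpose_self (h : IsSpectralDecomp M Φ μ) : Φ * Φᵀ = 1 :=
  mul_eq_one_comm.1 h.transpose_mul_self

theorem mul_eq (h : IsSpectralDecomp M Φ μ) : M * Φ = Φ * diagonal μ := by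
  rw [h.eq_mul_mul_transpose, Matrix.mul_assoc, h.transpose_mul_self, Matrix.mul_one]

theorem mul (hM : IsSpectralDecomp M Φ μ) (hN : IsSpectralDecomp N Φ ν) :
    IsSpectralDecomp (M * N) Φ (μ * ν) where
  transpose_mul_self := hM.transpose_mul_self
  eq_mul_mul_transpose := by
    rw [hN.eq_mul_mul_transpose, ← Matrix.mul_assoc, ← Matrix.mul_assoc, hM.mul_eq,
      Matrix.mul_assoc Φ, diagonal_mul_diagonal']
    rfl

theorem one (h : IsSpectralDecomp M Φ μ) : IsSpectralDecomp 1 Φ 1 where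
  transpose_mul_self := h.transpose_mul_self
  eq_mul_mul_transpose := by simp [Pi.one_def, h.mul_transpose_self]

theorem pow (h : IsSpectralDecomp M Φ μ) : ∀ j : ℕ, IsSpectralDecomp (M ^ j) Φ (μ ^ j)
  | 0 => by simpa using h.one
  | j + 1 => by simpa only [pow_succ] using (h.pow j).mul h

theorem one_add_smul (h : IsSpectralDecomp M Φ μ) (ε : ℝ) :
    IsSpectralDecomp (1 + ε • M) Φ (1 + ε • μ) where
  transpose_mul_self := h.transpose_mul_self
  eq_mul_mul_transpose := by
    have hdiag : diagonal (1 + ε • μ) = 1 + ε • diagonal μ := by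
      rw [← diagonal_smul, ← diagonal_one, diagonal_add]
      rfl
    rw [hdiag, Matrix.mul_add, Matrix.add_mul, Matrix.mul_one, h.mul_transpose_self,
      Matrix.mul_smul, Matrix.smul_mul, ← h.eq_mul_mul_transpose]

theorem submatrix {κ : Type*} [Fintype κ] [DecidableEq κ] (h : IsSpectralDecomp M Φ μ)
    (f e : κ ≃ ι) : IsSpectralDecomp (M.submatrix f f) (Φ.submatrix f e) (μ ∘ e) where
  transpose_mul_self := by
    rw [transpose_submatrix, submatrix_mul_equiv, h.transpose_mul_self, submatrix_one_equiv]
  eq_mul_mul_transpose := by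
    rw [← submatrix_diagonal_equiv, transpose_submatrix, submatrix_mul_equiv, submatrix_mul_equiv,
      ← h.eq_mul_mul_transpose]

theorem trace_eq (h : IsSpectralDecomp M Φ μ) : M.trace = ∑ i, μ i := by
  rw [h.eq_mul_mul_transpose, trace_mul_comm, ← Matrix.mul_assoc, h.transpose_mul_self,
    Matrix.one_mul, trace_diagonal]

theorem le (hM : IsSpectralDecomp M Φ μ) (hN : IsSpectralDecomp N Φ ν) (hμν : μ ≤ ν) :
    M ≤ N := by
  rw [Matrix.le_iff, hM.eq_mul_mul_transpose, hN.eq_mul_mul_transpose, ← Matrix.sub_mul,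
    ← Matrix.mul_sub, diagonal_sub]
  exact (PosSemidef.diagonal (sub_nonneg.2 hμν)).mul_mul_conjTranspose_same Φ

theorem nonneg (h : IsSpectralDecomp M Φ μ) (hμ : 0 ≤ μ) : 0 ≤ M :=
  (show IsSpectralDecomp 0 Φ 0 from ⟨h.transpose_mul_self, by simp⟩).le h hμ

theorem trace_mul_le_sum_max (h : IsSpectralDecomp M Φ μ) {P : Matrix ι ι ℝ}
    (hP : P ∈ Set.Icc 0 1) : (P * M).trace ≤ ∑ i, max (μ i) 0 := by
  have hpos : IsSpectralDecomp (Φ * diagonal (fun i ↦ max (μ i) 0) * Φᵀ) Φ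
      (fun i ↦ max (μ i) 0) := ⟨h.transpose_mul_self, rfl⟩
  calc (P * M).trace
      ≤ (P * (Φ * diagonal (fun i ↦ max (μ i) 0) * Φᵀ)).trace :=
        trace_mul_le_trace_mul hP.1 (h.le hpos fun _ ↦ le_max_left _ _)
    _ ≤ (Φ * diagonal (fun i ↦ max (μ i) 0) * Φᵀ).trace :=
        trace_mul_le_trace hP.2 (hpos.nonneg fun _ ↦ le_max_right _ _)
    _ = ∑ i, max (μ i) 0 := hpos.trace_eq

theorem exists_mem_Icc_trace_eq (h : IsSpectralDecomp M Φ μ) (I : Finset ι) :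
    ∃ P ∈ Set.Icc (0 : Matrix ι ι ℝ) 1, P.trace = #I ∧ (P * M).trace = ∑ i ∈ I, μ i := by
  set χ : ι → ℝ := fun i ↦ if i ∈ I then 1 else 0
  have hP : IsSpectralDecomp (Φ * diagonal χ * Φᵀ) Φ χ := ⟨h.transpose_mul_self, rfl⟩
  have hχ : 0 ≤ χ ∧ χ ≤ 1 := by
    constructor <;> intro i <;> by_cases hi : i ∈ I <;> simp [χ, hi]
  refine ⟨_, ⟨hP.nonneg hχ.1, hP.le h.one hχ.2⟩, ?_, ?_⟩
  · simp [hP.trace_eq, χ]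
  · simp [(hP.mul h).trace_eq, χ]

theorem mulVec_col (h : IsSpectralDecomp M Φ μ) (j : ι) : M *ᵥ Φ.col j = μ j • Φ.col j := by
  ext i
  exact (congrFun₂ h.mul_eq i j).trans (by rw [mul_diagonal, mul_comm]; rfl)

theorem col_dotProduct_col_self (h : IsSpectralDecomp M Φ μ) (j : ι) : Φ.col j ⬝ᵥ Φ.col j = 1 := by
  simpa [mul_apply, dotProduct] using congrFun₂ h.transpose_mul_self j j

theorem eigenvalues_nonneg (h : IsSpectralDecomp M Φ μ) (hM : 0 ≤ M) : 0 ≤ μ := fun j ↦ by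
  simpa [h.mulVec_col, h.col_dotProduct_col_self] using
    (nonneg_iff_posSemidef.1 hM).dotProduct_mulVec_nonneg (Φ.col j)

theorem apply_self (h : IsSpectralDecomp M Φ μ) (i : ι) : M i i = ∑ j, μ j * Φ i j ^ 2 := by
  rw [h.eq_mul_mul_transpose, mul_apply]
  exact sum_congr rfl fun j _ ↦ by rw [mul_diagonal, transpose_apply]; ring

theorem dotProduct_mulVec (h : IsSpectralDecomp M Φ μ) (x : ι → ℝ) :
    x ⬝ᵥ M *ᵥ x = ∑ i, μ i * (x ᵥ* Φ) i ^ 2 := by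
  rw [h.eq_mul_mul_transpose, ← mulVec_mulVec, mulVec_transpose, ← mulVec_mulVec,
    Matrix.dotProduct_mulVec]
  simp only [dotProduct, mulVec_diagonal]
  exact sum_congr rfl fun i _ ↦ by ring

theorem dotProduct_mulVec_neg (h : IsSpectralDecomp M Φ μ) {x : ι → ℝ} (hx : x ≠ 0)
    (hzero : ∀ i, 0 ≤ μ i → (x ᵥ* Φ) i = 0) : x ⬝ᵥ M *ᵥ x < 0 := by
  have hxΦ : x ᵥ* Φ ≠ 0 := fun h0 ↦ hx <| by
    rw [← vecMul_one x, ← h.mul_transpose_self, ← vecMul_vecMul, h0, zero_vecMul]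
  obtain ⟨i, hi⟩ := Function.ne_iff.1 hxΦ
  have hterm (j : ι) : μ j * (x ᵥ* Φ) j ^ 2 ≤ 0 := by
    rcases le_or_gt 0 (μ j) with hj | hj
    · simp [hzero j hj]
    · exact mul_nonpos_of_nonpos_of_nonneg hj.le (sq_nonneg _)
  rw [h.dotProduct_mulVec]
  refine sum_neg' (fun j _ ↦ hterm j) ⟨i, mem_univ i, ?_⟩
  exact mul_neg_of_neg_of_pos (not_le.1 fun hμ ↦ hi (hzero i hμ)) (sq_pos_of_ne_zero hi)

theorem exists_dotProduct_mulVec_neg_neg {Ψ : Matrix ι ι ℝ} (hM : IsSpectralDecomp M Φ μ)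
    (hN : IsSpectralDecomp N Ψ ν) (w : ι → ℝ)
    (hcard : Fintype.card {i // 0 ≤ μ i} + Fintype.card {i // 0 ≤ ν i} + 1 < Fintype.card ι) :
    ∃ x, w ⬝ᵥ x = 0 ∧ x ⬝ᵥ M *ᵥ x < 0 ∧ x ⬝ᵥ N *ᵥ x < 0 := by
  let C := fromRows (Φᵀ.submatrix (Subtype.val : {i // 0 ≤ μ i} → ι) id)
    (fromRows (Ψᵀ.submatrix (Subtype.val : {i // 0 ≤ ν i} → ι) id) (replicateRow Unit w))
  obtain ⟨x, hx, hx0⟩ := Submodule.exists_mem_ne_zero_of_ne_bot <|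
    LinearMap.ker_ne_bot_of_finrank_lt (f := C.mulVecLin)
      (by simpa [← add_assoc] using hcard)
  have hCx : C *ᵥ x = 0 := hx
  simp only [C, fromRows_mulVec] at hCx
  refine ⟨x, congrFun hCx (.inr (.inr ())), ?_, ?_⟩
  · refine hM.dotProduct_mulVec_neg hx0 fun i hi ↦ ?_
    rw [← mulVec_transpose]
    exact congrFun hCx (.inl ⟨i, hi⟩)
  · refine hN.dotProduct_mulVec_neg hx0 fun i hi ↦ ?_
    rw [← mulVec_transpose]
    exact congrFun hCx (.inr (.inl ⟨i, hi⟩))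

theorem mulVec_submatrix_injective {κ α : Type*} [Fintype κ] (h : IsSpectralDecomp M Φ μ)
    {f : α → ι} (hneg : ∀ y ≠ 0, (∀ a, y (f a) = 0) → y ⬝ᵥ M *ᵥ y < 0) {g : κ → ι}
    (hg : Function.Injective g) (hμ : ∀ k, 0 ≤ μ (g k)) :
    Function.Injective (Φ.submatrix f g).mulVec := by
  classical
  set E := Φ.submatrix id g with hE_def
  have hE : Eᵀ * E = 1 := by
    rw [hE_def, transpose_submatrix, ← submatrix_mul _ _ _ _ _ Function.bijective_id,
      h.transpose_mul_self, submatrix_one _ hg]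
  have hME : M * E = E * diagonal (μ ∘ g) := by
    ext i k
    simpa [hE_def, mul_apply, diagonal_apply] using congrFun₂ h.mul_eq i (g k)
  refine (injective_iff_map_eq_zero (E.submatrix f id).mulVecLin).2 fun x hx ↦ ?_
  by_contra hx0
  have hEx : E *ᵥ x ≠ 0 := fun h0 ↦ hx0 <| by
    rw [← one_mulVec x, ← hE, ← mulVec_mulVec, h0, mulVec_zero]
  refine (hneg _ hEx fun a ↦ congrFun hx a).not_ge ?_
  have hform : (E *ᵥ x) ⬝ᵥ M *ᵥ E *ᵥ x = ∑ k, μ (g k) * x k ^ 2 := by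
    rw [mulVec_mulVec, hME, ← mulVec_mulVec, Matrix.dotProduct_mulVec, vecMul_mulVec, hE,
      vecMul_one]
    simp only [dotProduct, mulVec_diagonal]
    exact sum_congr rfl fun k _ ↦ by rw [Function.comp_apply]; ring
  exact hform ▸ sum_nonneg fun k _ ↦ mul_nonneg (hμ k) (sq_nonneg _)

end IsSpectralDecomp

theorem exists_sum_equiv_of_card_eq {ι α β : Type*} [Fintype ι] [Fintype α] [Fintype β]
    (p : ι → Prop) [DecidablePred p]
    (hα : Fintype.card α = Fintype.card {i // p i})
    (hβ : Fintype.card β = Fintype.card {i // ¬ p i}) :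
    ∃ e : α ⊕ β ≃ ι, (∀ a, p (e (.inl a))) ∧ ∀ b, ¬ p (e (.inr b)) :=
  let eα := Fintype.equivOfCardEq hα
  let eβ := Fintype.equivOfCardEq hβ
  ⟨(eα.sumCongr eβ).trans (Equiv.sumCompl p), fun a ↦ by simp [(eα a).2],
    fun b ↦ by simp [(eβ b).2]⟩

end Spectral

section Substochastic

open Matrix

/-- The matrices with nonnegative entries whose column sums are at most `1`. Their negatives
parametrise the subspaces that power iteration produces on a split graph. -/
def colSubstochastic (β α : Type*) [Fintype β] : Set (Matrix β α ℝ) :=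
  {W | (∀ v u, 0 ≤ W v u) ∧ 1 ᵥ* W ≤ 1}

theorem zero_mem_colSubstochastic {α β : Type*} [Fintype β] :
    (0 : Matrix β α ℝ) ∈ colSubstochastic β α := by
  simp [colSubstochastic]

theorem isCompact_colSubstochastic {α β : Type*} [Fintype β] :
    IsCompact (colSubstochastic β α) := by
  have hbox : IsCompact ((Set.Icc (0 : ℝ) 1).matrix : Set (Matrix β α ℝ)) := isCompact_Icc.matrix
  have hclosed : IsClosed (colSubstochastic β α) :=
    (isClosed_le (f := fun _ ↦ (0 : β → α → ℝ)) continuous_const continuous_id).inter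
      (isClosed_le (continuous_const.matrix_vecMul continuous_id) continuous_const)
  refine hbox.of_isClosed_subset hclosed fun W hW v u ↦ ⟨hW.1 v u, ?_⟩
  refine (single_le_sum (fun w _ ↦ hW.1 w u) (mem_univ v)).trans ?_
  simpa [vecMul, dotProduct] using hW.2 u

theorem mul_apply_mem_Icc {α β γ : Type*} [Fintype β] {A : Matrix γ β ℝ} {W : Matrix β α ℝ}
    (hA : ∀ u v, A u v ∈ Set.Icc 0 1) (hW : W ∈ colSubstochastic β α) (u : γ) (v : α) :
    (A * W) u v ∈ Set.Icc 0 1 := by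
  rw [mul_apply]
  refine ⟨sum_nonneg fun w _ ↦ mul_nonneg (hA u w).1 (hW.1 w v), ?_⟩
  calc ∑ w, A u w * W w v
      ≤ ∑ w, W w v := sum_le_sum fun w _ ↦ mul_le_of_le_one_left (hW.1 w v) (hA u w).2
    _ ≤ 1 := by simpa [vecMul, dotProduct] using hW.2 v

variable {α β : Type*} [Fintype α] [DecidableEq α] {d : α → ℝ} {H : Matrix α α ℝ}

theorem nonneg_of_nonneg_vecMul_diagonal_sub (hH : ∀ v u, 0 ≤ H v u)
    (hd : ∀ u, ∑ v, H v u < d u) {x : α → ℝ} (hx : 0 ≤ x ᵥ* (diagonal d - H)) : 0 ≤ x := by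
  intro u₀
  obtain ⟨u, -, hu⟩ := exists_min_image univ x ⟨u₀, mem_univ _⟩
  suffices 0 ≤ x u from this.trans (hu u₀ (mem_univ _))
  by_contra! hneg
  refine (hx u).not_gt ?_
  calc (x ᵥ* (diagonal d - H)) u
      = x u * d u - ∑ v, x v * H v u := by
        rw [vecMul_sub, Pi.sub_apply, vecMul_diagonal, vecMul, dotProduct]
    _ ≤ x u * d u - ∑ v, x u * H v u := by
        gcongr with v
        exacts [hH v u, hu v (mem_univ v)]
    _ = x u * (d u - ∑ v, H v u) := by rw [mul_sub, mul_sum]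
    _ < 0 := mul_neg_of_neg_of_pos hneg (sub_pos.2 (hd u))

theorem isUnit_diagonal_sub (hH : ∀ v u, 0 ≤ H v u) (hd : ∀ u, ∑ v, H v u < d u) :
    IsUnit (diagonal d - H) := by
  rw [← vecMul_injective_iff_isUnit]
  have hle {x y : α → ℝ} (hxy : x ᵥ* (diagonal d - H) = y ᵥ* (diagonal d - H)) : x ≤ y :=
    sub_nonneg.1 <| nonneg_of_nonneg_vecMul_diagonal_sub hH hd <| by rw [sub_vecMul, hxy, sub_self]
  exact fun x y hxy ↦ (hle hxy).antisymm (hle hxy.symm)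

theorem exists_mem_colSubstochastic_mul_eq [Fintype β] (hH : ∀ v u, 0 ≤ H v u)
    (hd : ∀ u, ∑ v, H v u < d u) {G : Matrix β α ℝ} (hG : ∀ v u, 0 ≤ G v u)
    (hcol : 1 ᵥ* G ≤ 1 ᵥ* (diagonal d - H)) :
    ∃ W ∈ colSubstochastic β α, W * (diagonal d - H) = G := by
  obtain ⟨B, hB⟩ := isUnit_diagonal_sub hH hd
  have hmul : G * (↑B⁻¹ : Matrix α α ℝ) * (diagonal d - H) = G := by
    rw [← hB, Matrix.mul_assoc, B.inv_mul, Matrix.mul_one]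
  refine ⟨_, ⟨fun v ↦ nonneg_of_nonneg_vecMul_diagonal_sub hH hd ?_, sub_nonneg.1 <|
    nonneg_of_nonneg_vecMul_diagonal_sub hH hd ?_⟩, hmul⟩
  · rw [← mul_apply_eq_vecMul, hmul]
    exact hG v
  · rwa [sub_vecMul, vecMul_vecMul, hmul, sub_nonneg]

end Substochastic

section PowerIteration

open Matrix Filter Topology

variable {α β : Type*} [Fintype α] [Fintype β] [DecidableEq α] [DecidableEq β]
  {T Φ : Matrix (α ⊕ β) (α ⊕ β) ℝ} {ν : α ⊕ β → ℝ}

theorem exists_tendsto_toCols₁_pow_mul (hT : IsSpectralDecomp T Φ ν) (hν : ∀ i, 0 < ν i)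
    (hlt : ∀ a b, ν (.inr b) < ν (.inl a)) (hΨ : IsUnit Φ.toBlocks₁₁) :
    ∃ S : ℕ → Matrix α α ℝ, Tendsto (fun j ↦ (T ^ j).toCols₁ * S j) atTop (𝓝 Φ.toCols₁) := by
  set C : Matrix (α ⊕ β) α ℝ := Φᵀ.toCols₁ * Φ.toBlocks₁₁ᵀ⁻¹
  have hC (u a : α) : C (.inl u) a = (1 : Matrix α α ℝ) u a := by
    rw [← mul_nonsing_inv Φ.toBlocks₁₁ᵀ (isUnit_det_transpose _ ((isUnit_iff_isUnit_det _).1 hΨ))]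
    rfl
  have hentry (i : α ⊕ β) (a : α) : Tendsto (fun j ↦ C i a * (ν i / ν (.inl a)) ^ j) atTop
      (𝓝 ((1 : Matrix (α ⊕ β) (α ⊕ β) ℝ).toCols₁ i a)) := by
    obtain u | b := i
    · obtain rfl | hua := eq_or_ne u a
      · simp [hC, (hν _).ne']
      · simp [hC, hua]
    · have hratio : Tendsto (fun j ↦ (ν (.inr b) / ν (.inl a)) ^ j) atTop (𝓝 0) :=
        tendsto_pow_atTop_nhds_zero_of_lt_one (div_nonneg (hν _).le (hν _).le)
          ((div_lt_one (hν _)).2 (hlt a b))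
      simpa using hratio.const_mul (C (.inr b) a)
  have hlim := ((continuous_const (y := Φ)).matrix_mul continuous_id).tendsto _ |>.comp
    (tendsto_pi_nhds.2 fun i ↦ tendsto_pi_nhds.2 fun a ↦ hentry i a)
  refine ⟨fun j ↦ Φ.toBlocks₁₁ᵀ⁻¹ * diagonal fun a ↦ (ν (.inl a) ^ j)⁻¹, ?_⟩
  have hfac (j : ℕ) :
      (T ^ j).toCols₁ * (Φ.toBlocks₁₁ᵀ⁻¹ * diagonal fun a ↦ (ν (.inl a) ^ j)⁻¹) =
        Φ * of fun i a ↦ C i a * (ν i / ν (.inl a)) ^ j := by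
    have hcols : (T ^ j).toCols₁ = Φ * (diagonal (ν ^ j) * Φᵀ.toCols₁) := by
      rw [(hT.pow j).eq_mul_mul_transpose, Matrix.mul_assoc]
      rfl
    have hdiag : diagonal (ν ^ j) * C * diagonal (fun a ↦ (ν (.inl a) ^ j)⁻¹) =
        of fun i a ↦ C i a * (ν i / ν (.inl a)) ^ j := by
      ext i a
      rw [mul_diagonal, diagonal_mul, of_apply, div_pow, Pi.pow_apply]
      ring
    rw [hcols, ← hdiag]
    simp only [C, Matrix.mul_assoc]
  have hone : Φ * (1 : Matrix (α ⊕ β) (α ⊕ β) ℝ).toCols₁ = Φ.toCols₁ :=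
    congrArg toCols₁ (Matrix.mul_one Φ)
  simp only [hfac]
  exact hone ▸ hlim

theorem exists_mem_mul_toBlocks₁₁_eq (hT : IsSpectralDecomp T Φ ν) (hν : ∀ i, 0 < ν i)
    (hlt : ∀ a b, ν (.inr b) < ν (.inl a)) (hΨ : IsUnit Φ.toBlocks₁₁) {K : Set (Matrix β α ℝ)}
    (hK : IsCompact K)
    (hiter : ∀ j, ∃ W ∈ K, ∃ Y : Matrix α α ℝ,
      (T ^ j).toCols₁ = fromRows (1 : Matrix α α ℝ) W * Y) :
    ∃ W ∈ K, W * Φ.toBlocks₁₁ = Φ.toBlocks₂₁ := by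
  obtain ⟨S, hS⟩ := exists_tendsto_toCols₁_pow_mul hT hν hlt hΨ
  choose W hW Y hY using hiter
  obtain ⟨V, hV, hWV⟩ := hK.ultrafilter_le_nhds ((hyperfilter ℕ).map W)
    (tendsto_principal.2 (Eventually.of_forall hW))
  have hS' : Tendsto (fun j ↦ fromRows (Y j * S j) (W j * (Y j * S j))) (hyperfilter ℕ)
      (𝓝 Φ.toCols₁) := by
    refine (hS.mono_left Nat.hyperfilter_le_atTop).congr fun j ↦ ?_
    rw [hY, Matrix.mul_assoc, fromRows_mul, Matrix.one_mul]
  have htop : Tendsto (fun j ↦ Y j * S j) (hyperfilter ℕ) (𝓝 Φ.toBlocks₁₁) :=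
    ((continuous_id.matrix_submatrix Sum.inl id).tendsto _).comp hS'
  have hbot : Tendsto (fun j ↦ W j * (Y j * S j)) (hyperfilter ℕ) (𝓝 Φ.toBlocks₂₁) :=
    ((continuous_id.matrix_submatrix Sum.inr id).tendsto _).comp hS'
  have hprod : Tendsto (fun j ↦ W j * (Y j * S j)) (hyperfilter ℕ) (𝓝 (V * Φ.toBlocks₁₁)) :=
    ((continuous_fst.matrix_mul continuous_snd).tendsto (V, Φ.toBlocks₁₁)).comp
      (Tendsto.prodMk_nhds hWV htop)
  exact ⟨V, hV, tendsto_nhds_unique hprod hbot⟩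

end PowerIteration

section SplitGraph

open Matrix
open scoped MatrixOrder Pointwise

theorem one_vecMul_fromRows_neg {α β γ : Type*} [Fintype α] [Fintype β] (X : Matrix α γ ℝ)
    (Y : Matrix β γ ℝ) : 1 ᵥ* fromRows X (-Y) = 1 ᵥ* X - 1 ᵥ* Y := by
  ext
  simp [vecMul, dotProduct, sub_eq_add_neg]

variable {α β : Type*} [Fintype α] [Fintype β] [DecidableEq α] [DecidableEq β]

/-- The all-ones matrix, which is `|ι|` times the orthogonal projection onto the constant vectors,
an eigenspace of every Laplacian. -/
def onesMatrix (ι : Type*) : Matrix ι ι ℝ := vecMulVec 1 1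

@[simp]
theorem onesMatrix_apply {ι : Type*} (i j : ι) : onesMatrix ι i j = 1 := by
  simp [onesMatrix, vecMulVec_apply]

/-- The Laplacian, shifted by `-|α|`, of the split graph with clique `α`, independent set `β` and
weighted biadjacency matrix `A`. The shift puts the threshold between the `|α|` largest
eigenvalues and the other ones at `0`. -/
def splitLap (A : Matrix α β ℝ) : Matrix (α ⊕ β) (α ⊕ β) ℝ :=
  fromBlocks (diagonal (A *ᵥ 1) - onesMatrix α) (-A) (-Aᵀ)
    (diagonal (1 ᵥ* A - fun _ ↦ (Fintype.card α : ℝ)))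

theorem isHermitian_splitLap (A : Matrix α β ℝ) : (splitLap A).IsHermitian :=
  IsHermitian.fromBlocks ((isHermitian_diagonal _).sub (by ext; simp)) (by ext; simp)
    (isHermitian_diagonal _)

theorem one_vecMul_splitLap (A : Matrix α β ℝ) :
    1 ᵥ* splitLap A = -(Fintype.card α : ℝ) • 1 := by
  ext (u | v) <;> simp [splitLap, vecMul, mulVec, dotProduct, diagonal_apply] <;> ring

theorem one_vecMul_one_add_smul_splitLap (A : Matrix α β ℝ) (ε : ℝ) :
    1 ᵥ* (1 + ε • splitLap A) = (1 - ε * Fintype.card α) • 1 := by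
  rw [vecMul_add, vecMul_one, vecMul_smul, one_vecMul_splitLap]
  module

theorem one_add_smul_splitLap_mul_fromRows (A : Matrix α β ℝ) (ε : ℝ) (W : Matrix β α ℝ) :
    (1 + ε • splitLap A) * fromRows (1 : Matrix α α ℝ) (-W) =
      fromRows (diagonal (1 + ε • A *ᵥ 1) - ε • (onesMatrix α - A * W))
        (-(W + ε • (Aᵀ + diagonal (1 ᵥ* A - fun _ ↦ (Fintype.card α : ℝ)) * W))) := by
  rw [splitLap, Matrix.add_mul, Matrix.one_mul, Matrix.smul_mul, fromBlocks_mul_fromRows]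
  ext (u | v) a
  · simp only [Matrix.add_apply, Matrix.smul_apply, Matrix.sub_apply, fromRows_apply_inl,
      diagonal_apply, one_apply, Pi.add_apply, Pi.one_apply, Pi.smul_apply, onesMatrix_apply,
      smul_eq_mul, Matrix.mul_one, Matrix.neg_mul, Matrix.mul_neg, neg_neg]
    split_ifs <;> ring
  · simp only [Matrix.add_apply, Matrix.smul_apply, Matrix.neg_apply, fromRows_apply_inr,
      diagonal_mul, transpose_apply, smul_eq_mul, Matrix.mul_one, Matrix.mul_neg]
    ring

theorem add_smul_transpose_add_diagonal_mul_apply_nonneg {α β : Type*} [Fintype α]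
    [Fintype β] [DecidableEq β] {A : Matrix α β ℝ} (hA : ∀ u v, A u v ∈ Set.Icc 0 1) {ε : ℝ}
    (hε : 0 ≤ ε) (hεα : ε * Fintype.card α ≤ 1) {W : Matrix β α ℝ}
    (hW : W ∈ colSubstochastic β α) (v : β) (u : α) : 0 ≤ (W + ε • (Aᵀ +
      diagonal (1 ᵥ* A - fun _ ↦ (Fintype.card α : ℝ)) * W) : Matrix β α ℝ) v u := by
  have hcol : 0 ≤ (1 ᵥ* A) v := by
    simpa [vecMul, dotProduct] using sum_nonneg fun u _ ↦ (hA u v).1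
  calc 0 ≤ (1 - ε * Fintype.card α) * W v u + ε * (A u v + (1 ᵥ* A) v * W v u) := by
        have := hW.1 v u
        have := (hA u v).1
        have := sub_nonneg.2 hεα
        positivity
    _ = _ := by
        simp only [Matrix.add_apply, Matrix.smul_apply, transpose_apply, smul_eq_mul, diagonal_mul,
          Pi.sub_apply]
        ring

theorem exists_colSubstochastic_one_add_smul_splitLap_mul {A : Matrix α β ℝ}
    (hA : ∀ u v, A u v ∈ Set.Icc 0 1) {ε : ℝ} (hε : 0 < ε) (hεα : ε * Fintype.card α < 1)
    {W : Matrix β α ℝ} (hW : W ∈ colSubstochastic β α) :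
    ∃ W' ∈ colSubstochastic β α, ∃ B : Matrix α α ℝ,
      (1 + ε • splitLap A) * fromRows (1 : Matrix α α ℝ) (-W) =
        fromRows (1 : Matrix α α ℝ) (-W') * B := by
  have hstep := one_add_smul_splitLap_mul_fromRows A ε W
  set d := 1 + ε • A *ᵥ 1
  set H := ε • (onesMatrix α - A * W)
  set G := W + ε • (Aᵀ + diagonal (1 ᵥ* A - fun _ ↦ (Fintype.card α : ℝ)) * W)
  have hrow (u : α) : 0 ≤ (A *ᵥ 1) u := by
    simpa [mulVec, dotProduct] using sum_nonneg fun v _ ↦ (hA u v).1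
  have hH_nonneg (u v : α) : 0 ≤ H u v := by
    simpa [H, hε] using (mul_apply_mem_Icc hA hW u v).2
  have hH_sum (v : α) : ∑ u, H u v < d v := by
    calc ∑ u, H u v ≤ ∑ _u : α, ε := sum_le_sum fun u _ ↦ by
          simpa [H] using
            mul_le_of_le_one_right hε.le (sub_le_self 1 (mul_apply_mem_Icc hA hW u v).1)
      _ < 1 := by simpa [mul_comm] using hεα
      _ ≤ d v := by simpa [d] using mul_nonneg hε.le (hrow v)
  have hG_sum : 1 ᵥ* G ≤ 1 ᵥ* (diagonal d - H) := by
    have hdiff : 1 ᵥ* (diagonal d - H) - 1 ᵥ* G = (1 - ε * Fintype.card α) • (1 - 1 ᵥ* W) := by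
      rw [← one_vecMul_fromRows_neg, ← hstep, ← vecMul_vecMul, one_vecMul_one_add_smul_splitLap,
        smul_vecMul, one_vecMul_fromRows_neg, vecMul_one]
    rw [← sub_nonneg, hdiff]
    exact smul_nonneg (sub_pos.2 hεα).le (sub_nonneg.2 hW.2)
  obtain ⟨W', hW', hmul⟩ := exists_mem_colSubstochastic_mul_eq hH_nonneg hH_sum
    (add_smul_transpose_add_diagonal_mul_apply_nonneg hA hε.le hεα.le hW) hG_sum
  refine ⟨W', hW', diagonal d - H, ?_⟩
  rw [hstep, fromRows_mul, Matrix.one_mul, Matrix.neg_mul, hmul]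

theorem exists_toCols₁_one_add_smul_splitLap_pow_eq {A : Matrix α β ℝ}
    (hA : ∀ u v, A u v ∈ Set.Icc 0 1) {ε : ℝ} (hε : 0 < ε) (hεα : ε * Fintype.card α < 1) :
    ∀ j : ℕ, ∃ W ∈ -colSubstochastic β α, ∃ Y : Matrix α α ℝ,
      ((1 + ε • splitLap A) ^ j).toCols₁ = fromRows (1 : Matrix α α ℝ) W * Y
  | 0 => by
    refine ⟨0, by simpa using zero_mem_colSubstochastic, 1, ?_⟩
    ext (u | v) a <;> simp [one_apply]
  | j + 1 => by
    obtain ⟨W, hW, Y, hY⟩ := exists_toCols₁_one_add_smul_splitLap_pow_eq hA hε hεα j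
    obtain ⟨W', hW', B, hB⟩ := exists_colSubstochastic_one_add_smul_splitLap_mul hA hε hεα hW
    refine ⟨-W', Set.neg_mem_neg.2 hW', B * Y, ?_⟩
    calc ((1 + ε • splitLap A) ^ (j + 1)).toCols₁
        = (1 + ε • splitLap A) * ((1 + ε • splitLap A) ^ j).toCols₁ := by rw [pow_succ']; rfl
      _ = fromRows (1 : Matrix α α ℝ) (-W') * (B * Y) := by
          rw [hY, ← Matrix.mul_assoc, ← neg_neg W, hB, Matrix.mul_assoc]

theorem exists_colSubstochastic_mul_toBlocks₁₁_eq_neg {A : Matrix α β ℝ}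
    (hA : ∀ u v, A u v ∈ Set.Icc 0 1) {Φ : Matrix (α ⊕ β) (α ⊕ β) ℝ} {μ : α ⊕ β → ℝ}
    (h : IsSpectralDecomp (splitLap A) Φ μ) (hlt : ∀ a b, μ (.inr b) < μ (.inl a))
    (hΨ : IsUnit Φ.toBlocks₁₁) :
    ∃ W ∈ colSubstochastic β α, W * Φ.toBlocks₁₁ = -Φ.toBlocks₂₁ := by
  obtain ⟨ε, hε, hlt_one⟩ := exists_pos_mul_lt one_pos (Fintype.card α + ∑ i, |μ i|)
  have hsum : 0 ≤ ∑ i, |μ i| := sum_nonneg fun i _ ↦ abs_nonneg _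
  have hεα : ε * Fintype.card α < 1 := by nlinarith
  have hν (i : α ⊕ β) : 0 < (1 + ε • μ) i := by
    have hi : |μ i| ≤ ∑ i, |μ i| := single_le_sum (fun i _ ↦ abs_nonneg (μ i)) (mem_univ i)
    simp only [Pi.add_apply, Pi.one_apply, Pi.smul_apply, smul_eq_mul]
    nlinarith [neg_abs_le (μ i), Nat.cast_nonneg (α := ℝ) (Fintype.card α)]
  obtain ⟨W, hW, hWΨ⟩ := exists_mem_mul_toBlocks₁₁_eq (h.one_add_smul ε) hν
    (fun a b ↦ by simpa [hε] using hlt a b) hΨ isCompact_colSubstochastic.neg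
    (exists_toCols₁_one_add_smul_splitLap_pow_eq hA hε hεα)
  exact ⟨-W, hW, by rw [Matrix.neg_mul, hWΨ]⟩

theorem trace_eq_of_mul_eq_mul {X D Ψ : Matrix α α ℝ} (hΨ : IsUnit Ψ) (h : X * Ψ = Ψ * D) :
    X.trace = D.trace := by
  obtain ⟨Ψ, rfl⟩ := hΨ
  rw [← trace_units_conj Ψ D, ← h, Matrix.mul_assoc, Ψ.mul_inv, Matrix.mul_one]

theorem sum_eigenvalues_inl_splitLap_le {A : Matrix α β ℝ}
    (hA : ∀ u v, A u v ∈ Set.Icc 0 1) {Φ : Matrix (α ⊕ β) (α ⊕ β) ℝ} {μ : α ⊕ β → ℝ}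
    (h : IsSpectralDecomp (splitLap A) Φ μ) (hlt : ∀ a b, μ (.inr b) < μ (.inl a))
    (hΨ : IsUnit Φ.toBlocks₁₁) : ∑ a, μ (.inl a) ≤ ∑ u, ∑ v, A u v := by
  obtain ⟨W, hW, hWΨ⟩ := exists_colSubstochastic_mul_toBlocks₁₁_eq_neg hA h hlt hΨ
  set X : Matrix α α ℝ := diagonal (A *ᵥ 1) - onesMatrix α + A * W with hX
  have hXΨ : X * Φ.toBlocks₁₁ = Φ.toBlocks₁₁ * diagonal fun a ↦ μ (.inl a) := by
    have hblock := congrArg toBlocks₁₁ h.mul_eq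
    nth_rw 1 [splitLap, ← fromBlocks_toBlocks Φ, fromBlocks_multiply, toBlocks_fromBlocks₁₁]
      at hblock
    rw [hX, Matrix.add_mul, Matrix.mul_assoc, hWΨ, Matrix.mul_neg, ← Matrix.neg_mul, hblock]
    ext u a
    simp [toBlocks₁₁]
  calc ∑ a, μ (.inl a) = X.trace := by rw [trace_eq_of_mul_eq_mul hΨ hXΨ, trace_diagonal]
    _ = ∑ u, (∑ v, A u v - 1 + (A * W) u u) := by
        simp [hX, trace, mulVec, dotProduct]
    _ ≤ ∑ u, ∑ v, A u v := by
        gcongr with u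
        linarith [(mul_apply_mem_Icc hA hW u u).2]

theorem dotProduct_splitLap_mulVec_neg {A : Matrix α β ℝ}
    (hcol : ∀ v, (1 ᵥ* A) v < Fintype.card α) {y : α ⊕ β → ℝ} (hy : y ≠ 0)
    (hzero : ∀ u, y (.inl u) = 0) : y ⬝ᵥ splitLap A *ᵥ y < 0 := by
  have hform : y ⬝ᵥ splitLap A *ᵥ y =
      ∑ v, ((1 ᵥ* A) v - Fintype.card α) * y (.inr v) ^ 2 := by
    have hy_elim : y = Sum.elim (0 : α → ℝ) (y ∘ Sum.inr) := by ext (u | v) <;> simp [hzero]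
    rw [hy_elim, splitLap, fromBlocks_mulVec, sumElim_dotProduct_sumElim]
    simp only [dotProduct, mulVec_diagonal, Pi.zero_apply, zero_mul, sum_const_zero, zero_add,
      Sum.elim_comp_inl, Sum.elim_comp_inr, mulVec_zero, Pi.add_apply, Pi.sub_apply,
      Function.comp_apply, Sum.elim_inr]
    exact sum_congr rfl fun v _ ↦ by ring
  have hterm (v : β) : ((1 ᵥ* A) v - Fintype.card α) * y (.inr v) ^ 2 ≤ 0 :=
    mul_nonpos_of_nonpos_of_nonneg (sub_neg.2 (hcol v)).le (sq_nonneg _)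
  obtain ⟨u | v, hv⟩ := Function.ne_iff.1 hy
  · exact absurd (hzero u) hv
  · rw [hform]
    exact sum_neg' (fun v _ ↦ hterm v) ⟨v, mem_univ v,
      mul_neg_of_neg_of_pos (sub_neg.2 (hcol v)) (sq_pos_of_ne_zero hv)⟩

theorem card_nonneg_eigenvalues_splitLap_le {A : Matrix α β ℝ}
    (hcol : ∀ v, (1 ᵥ* A) v < Fintype.card α) {Φ : Matrix (α ⊕ β) (α ⊕ β) ℝ} {μ : α ⊕ β → ℝ}
    (h : IsSpectralDecomp (splitLap A) Φ μ) :
    Fintype.card {i // 0 ≤ μ i} ≤ Fintype.card α := by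
  have hinj := h.mulVec_submatrix_injective (f := Sum.inl)
    (fun y ↦ dotProduct_splitLap_mulVec_neg hcol) Subtype.val_injective fun i : {i // 0 ≤ μ i} ↦ i.2
  simpa using LinearMap.finrank_le_finrank_of_injective (f := mulVecLin _) hinj

theorem trace_mul_splitLap_le_of_card_eq {A : Matrix α β ℝ} (hA : ∀ u v, A u v ∈ Set.Icc 0 1)
    (hcol : ∀ v, (1 ᵥ* A) v < Fintype.card α) {Φ : Matrix (α ⊕ β) (α ⊕ β) ℝ} {μ : α ⊕ β → ℝ}
    (h : IsSpectralDecomp (splitLap A) Φ μ)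
    (hcard : Fintype.card {i // 0 ≤ μ i} = Fintype.card α)
    {P : Matrix (α ⊕ β) (α ⊕ β) ℝ} (hP : P ∈ Set.Icc 0 1) :
    (P * splitLap A).trace ≤ ∑ u, ∑ v, A u v := by
  obtain ⟨e, hnonneg, hneg⟩ := exists_sum_equiv_of_card_eq (β := β) (0 ≤ μ ·) hcard.symm
    (by rw [Fintype.card_subtype_compl, Fintype.card_sum, hcard, Nat.add_sub_cancel_left])
  have he : IsSpectralDecomp (splitLap A) (Φ.submatrix id e) (μ ∘ e) := h.submatrix (.refl _) e
  calc (P * splitLap A).trace ≤ ∑ i, max ((μ ∘ e) i) 0 := he.trace_mul_le_sum_max hP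
    _ = ∑ a, (μ ∘ e) (.inl a) := by
        simp [Fintype.sum_sum_type, max_eq_left (hnonneg _), max_eq_right (not_le.1 (hneg _)).le]
    _ ≤ ∑ u, ∑ v, A u v :=
        sum_eigenvalues_inl_splitLap_le hA he
          (fun a b ↦ (not_le.1 (hneg b)).trans_le (hnonneg a))
          (mulVec_injective_iff_isUnit.1 <| he.mulVec_submatrix_injective
            (fun y ↦ dotProduct_splitLap_mulVec_neg hcol) Sum.inl_injective hnonneg)

/-- The biadjacency matrix of the complement of the split graph with biadjacency matrix `A`,
whose clique is `β`. -/
def complBiadj (A : Matrix α β ℝ) : Matrix β α ℝ := of fun v u ↦ 1 - A u v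

theorem splitLap_complBiadj (A : Matrix α β ℝ) :
    splitLap (complBiadj A) =
      (-splitLap A - onesMatrix (α ⊕ β)).submatrix (Equiv.sumComm β α) (Equiv.sumComm β α) := by
  ext (v | u) (v' | u') <;>
    simp [splitLap, complBiadj, mulVec, vecMul, dotProduct, diagonal_apply] <;> split_ifs <;> ring

theorem sum_complBiadj {α β : Type*} [Fintype α] [Fintype β] (A : Matrix α β ℝ) :
    ∑ v, ∑ u, complBiadj A v u = Fintype.card α * Fintype.card β - ∑ u, ∑ v, A u v := by
  simp only [complBiadj, of_apply]
  rw [sum_comm]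
  simp

theorem trace_splitLap (A : Matrix α β ℝ) : (splitLap A).trace =
    2 * (∑ u, ∑ v, A u v) - Fintype.card α - Fintype.card α * Fintype.card β := by
  have hcomm : ∑ v, ∑ u, A u v = ∑ u, ∑ v, A u v := sum_comm
  simp only [trace, splitLap, diag_apply, Fintype.sum_sum_type, fromBlocks_apply₁₁,
    Matrix.sub_apply, diagonal_apply_eq, mulVec, dotProduct, Pi.one_apply, mul_one,
    onesMatrix_apply, sum_sub_distrib, sum_const, card_univ, nsmul_eq_mul, fromBlocks_apply₂₂,
    Pi.sub_apply, vecMul, one_mul, hcomm]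
  ring

theorem onesMatrix_nonneg (ι : Type*) [Finite ι] : 0 ≤ onesMatrix ι :=
  (posSemidef_vecMulVec_self_star (1 : ι → ℝ)).nonneg

theorem onesMatrix_mul_self (ι : Type*) [Fintype ι] :
    onesMatrix ι * onesMatrix ι = (Fintype.card ι : ℝ) • onesMatrix ι := by
  ext i j
  simp [mul_apply]

theorem isStarProjection_inv_card_smul_onesMatrix (ι : Type*) [Fintype ι] [Nonempty ι] :
    IsStarProjection ((Fintype.card ι : ℝ)⁻¹ • onesMatrix ι) where
  isIdempotentElem := by
    have hn : (Fintype.card ι : ℝ) ≠ 0 := by simp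
    rw [IsIdempotentElem, Matrix.smul_mul, Matrix.mul_smul, onesMatrix_mul_self,
      inv_smul_smul₀ hn]
  isSelfAdjoint := by
    ext i j
    simp

theorem proj_mul_mul_proj_of_mul_onesMatrix {ι : Type*} [Fintype ι] [DecidableEq ι] [Nonempty ι]
    {M : Matrix ι ι ℝ} {c : ℝ} (hJM : onesMatrix ι * M = c • onesMatrix ι)
    (hMJ : M * onesMatrix ι = c • onesMatrix ι) :
    (1 - (Fintype.card ι : ℝ)⁻¹ • onesMatrix ι) * M *
        (1 - (Fintype.card ι : ℝ)⁻¹ • onesMatrix ι) =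
      M - (c / Fintype.card ι) • onesMatrix ι := by
  have hn : (Fintype.card ι : ℝ) ≠ 0 := by simp
  simp only [Matrix.mul_sub, Matrix.sub_mul, Matrix.mul_one, Matrix.one_mul, Matrix.smul_mul,
    Matrix.mul_smul, onesMatrix_mul_self, hJM, hMJ]
  match_scalars <;> field_simp
  ring

theorem onesMatrix_mul_splitLap (A : Matrix α β ℝ) :
    onesMatrix (α ⊕ β) * splitLap A = -(Fintype.card α : ℝ) • onesMatrix (α ⊕ β) := by
  rw [onesMatrix, vecMulVec_mul, one_vecMul_splitLap, vecMulVec_smul]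

theorem splitLap_mul_onesMatrix (A : Matrix α β ℝ) :
    splitLap A * onesMatrix (α ⊕ β) = -(Fintype.card α : ℝ) • onesMatrix (α ⊕ β) := by
  have hone : splitLap A *ᵥ 1 = -(Fintype.card α : ℝ) • 1 := by
    rw [← vecMul_transpose, ← conjTranspose_eq_transpose_of_trivial, (isHermitian_splitLap A).eq,
      one_vecMul_splitLap]
  rw [onesMatrix, mul_vecMulVec, hone, smul_vecMulVec]

theorem trace_mul_splitLap_le_of_complBiadj [Nonempty α] {A : Matrix α β ℝ}
    (h : ∀ Q ∈ Set.Icc (0 : Matrix (β ⊕ α) (β ⊕ α) ℝ) 1,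
      (Q * splitLap (complBiadj A)).trace ≤ ∑ v, ∑ u, complBiadj A v u)
    {P : Matrix (α ⊕ β) (α ⊕ β) ℝ} (hP : P ∈ Set.Icc 0 1) :
    (P * splitLap A).trace ≤ ∑ u, ∑ v, A u v := by
  set J := onesMatrix (α ⊕ β)
  set n := (Fintype.card (α ⊕ β) : ℝ)
  have hn : n ≠ 0 := Nat.cast_ne_zero.2 Fintype.card_ne_zero
  set S := 1 - n⁻¹ • J
  have hQ : S * (1 - P) * S ∈ Set.Icc 0 1 := conj_mem_Icc_of_isStarProjection
    ⟨sub_nonneg.2 hP.2, sub_le_self 1 hP.1⟩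
    (isStarProjection_inv_card_smul_onesMatrix (α ⊕ β)).one_sub
  have hcompl := h _ (submatrix_equiv_mem_Icc hQ (Equiv.sumComm β α))
  have hconj : S * (-splitLap A - J) * S = -(splitLap A + (Fintype.card α / n) • J) := by
    rw [Matrix.mul_sub S, Matrix.sub_mul (S * _), Matrix.mul_neg, Matrix.neg_mul,
      proj_mul_mul_proj_of_mul_onesMatrix (onesMatrix_mul_splitLap A) (splitLap_mul_onesMatrix A),
      proj_mul_mul_proj_of_mul_onesMatrix (onesMatrix_mul_self _) (onesMatrix_mul_self _),
      div_self hn]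
    module
  have htrace : (S * (1 - P) * S * (-splitLap A - J)).trace =
      -((1 - P) * (splitLap A + (Fintype.card α / n) • J)).trace := by
    rw [← trace_neg, ← Matrix.mul_neg, ← hconj, Matrix.mul_assoc S, Matrix.mul_assoc S,
      trace_mul_comm S]
    simp only [Matrix.mul_assoc]
  rw [splitLap_complBiadj, submatrix_mul_equiv, trace_submatrix_equiv, htrace, sum_complBiadj]
    at hcompl
  have hJ : 0 ≤ (P * J).trace := trace_mul_nonneg hP.1 (onesMatrix_nonneg _)
  have htrJ : J.trace = n := by simp [J, n, trace]
  rw [Matrix.sub_mul, Matrix.one_mul, trace_sub, trace_add, Matrix.mul_add, trace_add,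
    Matrix.mul_smul, trace_smul, trace_smul, smul_eq_mul, smul_eq_mul, htrJ, trace_splitLap,
    div_mul_cancel₀ _ hn]
    at hcompl
  have : 0 ≤ (Fintype.card α / n : ℝ) * (P * J).trace := by positivity
  linarith

theorem one_vecMul_apply_lt_card {α β : Type*} [Fintype α] [Nonempty α] {A : Matrix α β ℝ}
    (hA : ∀ u v, A u v < 1) (v : β) : (1 ᵥ* A) v < Fintype.card α := by
  simpa [vecMul, dotProduct] using
    sum_lt_sum_of_nonempty (univ_nonempty (α := α)) fun u _ ↦ hA u v

theorem card_le_card_nonneg_eigenvalues_add {A : Matrix α β ℝ}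
    {Φ : Matrix (α ⊕ β) (α ⊕ β) ℝ} {μ : α ⊕ β → ℝ} {Ψ : Matrix (β ⊕ α) (β ⊕ α) ℝ}
    {ν : β ⊕ α → ℝ} (h : IsSpectralDecomp (splitLap A) Φ μ)
    (h' : IsSpectralDecomp (splitLap (complBiadj A)) Ψ ν) :
    Fintype.card (α ⊕ β) ≤ Fintype.card {i // 0 ≤ μ i} + Fintype.card {i // 0 ≤ ν i} + 1 := by
  by_contra! hlt
  set σ := Equiv.sumComm α β
  have hσ : Fintype.card {i // 0 ≤ (ν ∘ σ) i} = Fintype.card {i // 0 ≤ ν i} :=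
    Fintype.card_congr (σ.subtypeEquiv fun _ ↦ Iff.rfl)
  obtain ⟨x, hx, hneg, hneg'⟩ := h.exists_dotProduct_mulVec_neg_neg (h'.submatrix σ σ) 1 (hσ ▸ hlt)
  have hcompl : (splitLap (complBiadj A)).submatrix σ σ = -splitLap A - onesMatrix (α ⊕ β) := by
    rw [splitLap_complBiadj]
    ext i j
    simp [σ]
  have hJx : onesMatrix (α ⊕ β) *ᵥ x = 0 := by
    rw [onesMatrix, vecMulVec_mulVec, hx, MulOpposite.op_zero, zero_smul]
  rw [hcompl, sub_mulVec, hJx, sub_zero, neg_mulVec, dotProduct_neg] at hneg'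
  linarith

theorem trace_mul_splitLap_le_of_mem_Ioo [Nonempty α] [Nonempty β] {A : Matrix α β ℝ}
    (hA : ∀ u v, A u v ∈ Set.Ioo 0 1) {P : Matrix (α ⊕ β) (α ⊕ β) ℝ} (hP : P ∈ Set.Icc 0 1) :
    (P * splitLap A).trace ≤ ∑ u, ∑ v, A u v := by
  have hA' (v : β) (u : α) : complBiadj A v u ∈ Set.Ioo 0 1 := by
    simpa [complBiadj, and_comm] using hA u v
  have hcol := one_vecMul_apply_lt_card fun u v ↦ (hA u v).2
  have hcol' := one_vecMul_apply_lt_card fun v u ↦ (hA' v u).2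
  have h := isSpectralDecomp_eigenvectorUnitary (isHermitian_splitLap A)
  have h' := isSpectralDecomp_eigenvectorUnitary (isHermitian_splitLap (complBiadj A))
  rcases (card_nonneg_eigenvalues_splitLap_le hcol h).eq_or_lt with hcard | hcard
  · exact trace_mul_splitLap_le_of_card_eq (fun u v ↦ Set.Ioo_subset_Icc_self (hA u v)) hcol h
      hcard hP
  rcases (card_nonneg_eigenvalues_splitLap_le hcol' h').eq_or_lt with hcard' | hcard'
  · exact trace_mul_splitLap_le_of_complBiadj (fun Q ↦ trace_mul_splitLap_le_of_card_eq
      (fun v u ↦ Set.Ioo_subset_Icc_self (hA' v u)) hcol' h' hcard') hP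
  · have hcount := card_le_card_nonneg_eigenvalues_add h h'
    rw [Fintype.card_sum] at hcount
    lia

theorem trace_mul_splitLap_le {A : Matrix α β ℝ}
    (hA : ∀ u v, A u v ∈ Set.Icc 0 1) {P : Matrix (α ⊕ β) (α ⊕ β) ℝ} (hP : P ∈ Set.Icc 0 1) :
    (P * splitLap A).trace ≤ ∑ u, ∑ v, A u v := by
  rcases isEmpty_or_nonempty α with hα | hα
  · have hzero : splitLap A = 0 := by
      ext (u | v) (u' | v') <;>
        first
        | exact isEmptyElim u
        | exact isEmptyElim u'
        | simp [splitLap, vecMul, dotProduct, diagonal_apply]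
    simp [hzero]
  rcases isEmpty_or_nonempty β with hβ | hβ
  · have hneg : splitLap A = -onesMatrix (α ⊕ β) := by
      ext (u | v) (u' | v') <;>
        first
        | exact isEmptyElim v
        | exact isEmptyElim v'
        | simp [splitLap, mulVec, dotProduct, diagonal_apply]
    simpa [hneg] using trace_mul_nonneg hP.1 (onesMatrix_nonneg (α ⊕ β))
  have hmem : A ∈ closure (Set.univ.pi fun _ ↦ Set.univ.pi fun _ ↦ Set.Ioo 0 1) := by
    simp only [closure_pi_set, closure_Ioo zero_ne_one]
    exact fun u _ v _ ↦ hA u v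
  have hclosed : IsClosed {A | (P * splitLap A).trace ≤ ∑ u, ∑ v, A u v} :=
    isClosed_le (by unfold splitLap; fun_prop) (by fun_prop)
  refine closure_minimal (fun B hB ↦ ?_) hclosed hmem
  exact trace_mul_splitLap_le_of_mem_Ioo (fun u v ↦ hB u trivial v trivial) hP

end SplitGraph

section WeightedLaplacian

open Matrix
open scoped MatrixOrder

variable {ι κ : Type*} [Fintype ι] [DecidableEq ι] [Fintype κ] [DecidableEq κ]

/-- The Laplacian of the weighted graph on `ι` with weight matrix `W`. Weights make
Laplacians additive and monotone in the graph. Loops do not contribute. -/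
def weightedLap (W : Matrix ι ι ℝ) : Matrix ι ι ℝ := diagonal (W *ᵥ 1) - W

theorem weightedLap_add (W W' : Matrix ι ι ℝ) :
    weightedLap (W + W') = weightedLap W + weightedLap W' := by
  have hdiag : diagonal ((W + W') *ᵥ 1) = diagonal (W *ᵥ 1) + diagonal (W' *ᵥ 1) := by
    rw [add_mulVec, diagonal_add]
    rfl
  rw [weightedLap, weightedLap, weightedLap, hdiag]
  abel

theorem weightedLap_sub (W W' : Matrix ι ι ℝ) :
    weightedLap (W - W') = weightedLap W - weightedLap W' := by
  rw [eq_sub_iff_add_eq, ← weightedLap_add, sub_add_cancel]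

theorem weightedLap_submatrix (W : Matrix ι ι ℝ) (e : κ ≃ ι) :
    weightedLap (W.submatrix e e) = (weightedLap W).submatrix e e := by
  have hone : (1 : κ → ℝ) ∘ e.symm = 1 := rfl
  rw [weightedLap, submatrix_mulVec_equiv, hone, ← submatrix_diagonal_equiv]
  rfl

theorem two_mul_dotProduct_weightedLap_mulVec {W : Matrix ι ι ℝ} (hW : W.IsSymm) (x : ι → ℝ) :
    2 * (x ⬝ᵥ weightedLap W *ᵥ x) = ∑ u, ∑ v, W u v * (x u - x v) ^ 2 := by
  have hform : x ⬝ᵥ weightedLap W *ᵥ x = ∑ u, ∑ v, W u v * (x u ^ 2 - x u * x v) := by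
    rw [weightedLap, sub_mulVec, dotProduct_sub]
    simp only [dotProduct, mulVec_diagonal]
    simp only [mulVec, dotProduct, Pi.one_apply, mul_one, sum_mul, mul_sum, ← sum_sub_distrib]
    exact sum_congr rfl fun u _ ↦ sum_congr rfl fun v _ ↦ by ring
  have hform_swap : x ⬝ᵥ weightedLap W *ᵥ x = ∑ u, ∑ v, W u v * (x v ^ 2 - x u * x v) := by
    rw [hform, sum_comm]
    exact sum_congr rfl fun u _ ↦ sum_congr rfl fun v _ ↦ by rw [hW.apply]; ring
  rw [two_mul]
  nth_rw 1 [hform]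
  simp only [hform_swap, ← sum_add_distrib]
  exact sum_congr rfl fun u _ ↦ sum_congr rfl fun v _ ↦ by ring

theorem weightedLap_nonneg {W : Matrix ι ι ℝ} (hW : W.IsSymm) (hnonneg : ∀ u v, 0 ≤ W u v) :
    0 ≤ weightedLap W := by
  refine (PosSemidef.of_dotProduct_mulVec_nonneg ?_ fun x ↦ ?_).nonneg
  · exact (isHermitian_diagonal _).sub hW
  · have hform := two_mul_dotProduct_weightedLap_mulVec hW x
    have hsum : 0 ≤ ∑ u, ∑ v, W u v * (x u - x v) ^ 2 :=
      sum_nonneg fun u _ ↦ sum_nonneg fun v _ ↦ mul_nonneg (hnonneg u v) (sq_nonneg _)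
    rw [star_trivial]
    linarith

theorem weightedLap_mono {W W' : Matrix ι ι ℝ} (hW : W.IsSymm) (hW' : W'.IsSymm)
    (h : ∀ u v, W u v ≤ W' u v) : weightedLap W ≤ weightedLap W' := by
  rw [← sub_nonneg, ← weightedLap_sub]
  exact weightedLap_nonneg (hW'.sub hW) fun u v ↦ sub_nonneg.2 (h u v)

theorem trace_mul_weightedLap_le_sum {W P : Matrix ι ι ℝ} (hW : W.IsSymm)
    (hnonneg : ∀ u v, 0 ≤ W u v) (hP : P ≤ 1) :
    (P * weightedLap W).trace ≤ ∑ u, ∑ v, W u v := by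
  calc (P * weightedLap W).trace ≤ (weightedLap W).trace :=
        trace_mul_le_trace hP (weightedLap_nonneg hW hnonneg)
    _ = ∑ u, ((∑ v, W u v) - W u u) := by simp [weightedLap, trace, mulVec, dotProduct]
    _ ≤ ∑ u, ∑ v, W u v := sum_le_sum fun u _ ↦ sub_le_self _ (hnonneg u u)

theorem weightedLap_fromBlocks_onesMatrix {α β : Type*} [Fintype α] [Fintype β] [DecidableEq α]
    [DecidableEq β] (A : Matrix α β ℝ) :
    weightedLap (fromBlocks (onesMatrix α) A Aᵀ 0) = splitLap A + (Fintype.card α : ℝ) • 1 := by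
  ext (u | v) (u' | v') <;>
    simp [weightedLap, splitLap, mulVec, vecMul, dotProduct, diagonal_apply, one_apply] <;>
    split_ifs <;> ring

theorem trace_mul_weightedLap_sum_le {α β : Type*} [Fintype α] [Fintype β] [DecidableEq α]
    [DecidableEq β] {W P : Matrix (α ⊕ β) (α ⊕ β) ℝ} (hW : W.IsSymm)
    (hmem : ∀ i j, W i j ∈ Set.Icc 0 1) (hP : P ∈ Set.Icc 0 1) :
    (P * weightedLap W).trace ≤ Fintype.card α * P.trace + ∑ v : β, ∑ i, W (.inr v) i := by
  set A := W.toBlocks₁₂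
  have hsplit : (fromBlocks (onesMatrix α) A Aᵀ 0).IsSymm :=
    IsSymm.fromBlocks (by ext; simp) rfl (by simp)
  have hrest : (fromBlocks (0 : Matrix α α ℝ) 0 0 W.toBlocks₂₂).IsSymm :=
    IsSymm.fromBlocks (by simp) (by simp) (by ext; simp [toBlocks₂₂, hW.apply])
  have hle : weightedLap W ≤
      weightedLap (fromBlocks (onesMatrix α) A Aᵀ 0 + fromBlocks 0 0 0 W.toBlocks₂₂) := by
    refine weightedLap_mono hW (hsplit.add hrest) ?_
    rintro (u | v) (u' | v') <;> simp [A, toBlocks₁₂, toBlocks₂₂, (hmem _ _).2, hW.apply]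
  calc (P * weightedLap W).trace
      ≤ (P * weightedLap (fromBlocks (onesMatrix α) A Aᵀ 0 +
          fromBlocks 0 0 0 W.toBlocks₂₂)).trace := trace_mul_le_trace_mul hP.1 hle
    _ = Fintype.card α * P.trace + (P * splitLap A).trace +
          (P * weightedLap (fromBlocks 0 0 0 W.toBlocks₂₂)).trace := by
        rw [weightedLap_add, weightedLap_fromBlocks_onesMatrix, Matrix.mul_add, Matrix.mul_add,
          trace_add, trace_add, Matrix.mul_smul, Matrix.mul_one, trace_smul, smul_eq_mul]
        ring
    _ ≤ Fintype.card α * P.trace + ∑ u, ∑ v, A u v +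
          ∑ i, ∑ j, fromBlocks 0 0 0 W.toBlocks₂₂ i j := by
        gcongr
        · exact trace_mul_splitLap_le (fun u v ↦ hmem _ _) hP
        · refine trace_mul_weightedLap_le_sum hrest ?_ hP.2
          rintro (_ | _) (_ | _) <;> simp [toBlocks₂₂, (hmem _ _).1]
    _ = Fintype.card α * P.trace + ∑ v : β, ∑ i, W (.inr v) i := by
        rw [sum_comm (f := fun u v ↦ A u v)]
        simp [A, toBlocks₁₂, toBlocks₂₂, Fintype.sum_sum_type, sum_add_distrib, hW.apply, add_assoc]

theorem trace_mul_weightedLap_le_sum_min {W P : Matrix ι ι ℝ} (hW : W.IsSymm)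
    (hmem : ∀ i j, W i j ∈ Set.Icc 0 1) (hP : P ∈ Set.Icc 0 1) :
    (P * weightedLap W).trace ≤ ∑ u, min (∑ v, W u v) P.trace := by
  classical
  let e := Equiv.sumCompl fun u ↦ P.trace ≤ ∑ v, W u v
  have hmin_inl (u) : min (∑ v, W (e (.inl u)) v) P.trace = P.trace := min_eq_right u.2
  have hmin_inr (u) : min (∑ v, W (e (.inr u)) v) P.trace = ∑ i, W (e (.inr u)) (e i) :=
    (min_eq_left (not_le.1 u.2).le).trans (e.sum_comp _).symm
  have h := trace_mul_weightedLap_sum_le (hW.submatrix e) (fun i j ↦ hmem (e i) (e j))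
    (submatrix_equiv_mem_Icc hP e)
  rw [weightedLap_submatrix, submatrix_mul_equiv, trace_submatrix_equiv, trace_submatrix_equiv] at h
  refine h.trans_eq ?_
  rw [← e.sum_comp, Fintype.sum_sum_type]
  simp only [hmin_inl, hmin_inr, sum_const, card_univ, nsmul_eq_mul, submatrix_apply]

end WeightedLaplacian

section DegreeBound

open Matrix
open scoped MatrixOrder

variable {ι : Type*} [Fintype ι] [DecidableEq ι]

theorem sq_weightedLap_mulVec_div_le {W : Matrix ι ι ℝ} {u : ι} (hnonneg : ∀ v, 0 ≤ W u v)
    (x : ι → ℝ) :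
    (weightedLap W *ᵥ x) u ^ 2 / ∑ v, W u v ≤ ∑ v, W u v * (x u - x v) ^ 2 := by
  have hterm (v : ι) : 0 ≤ W u v * (x u - x v) ^ 2 := mul_nonneg (hnonneg v) (sq_nonneg _)
  have happly : (weightedLap W *ᵥ x) u = ∑ v, W u v * (x u - x v) := by
    rw [weightedLap, sub_mulVec, Pi.sub_apply, mulVec_diagonal]
    simp only [mulVec, dotProduct, Pi.one_apply, mul_one, sum_mul, mul_sub, sum_sub_distrib]
  refine div_le_of_le_mul₀ (sum_nonneg fun v _ ↦ hnonneg v) (sum_nonneg fun v _ ↦ hterm v) ?_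
  rw [happly, mul_comm]
  exact sum_sq_le_sum_mul_sum_of_sq_le_mul univ (fun v _ ↦ hnonneg v) (fun v _ ↦ hterm v)
    fun v _ ↦ le_of_eq (by ring)

theorem sum_sq_div_le_of_weightedLap_mulVec_eq_smul {W : Matrix ι ι ℝ} (hW : W.IsSymm)
    (hnonneg : ∀ u v, 0 ≤ W u v) {c : ℝ} (hc : 0 ≤ c) {x : ι → ℝ}
    (hx : weightedLap W *ᵥ x = c • x) :
    ∑ u, c * x u ^ 2 / ∑ v, W u v ≤ 2 * (x ⬝ᵥ x) := by
  rcases hc.eq_or_lt with rfl | hc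
  · simpa using dotProduct_self_star_nonneg x
  refine le_of_mul_le_mul_left ?_ hc
  calc c * ∑ u, c * x u ^ 2 / ∑ v, W u v
      = ∑ u, (weightedLap W *ᵥ x) u ^ 2 / ∑ v, W u v := by
        rw [hx, mul_sum]
        exact sum_congr rfl fun u _ ↦ by rw [Pi.smul_apply, smul_eq_mul]; ring
    _ ≤ ∑ u, ∑ v, W u v * (x u - x v) ^ 2 :=
        sum_le_sum fun u _ ↦ sq_weightedLap_mulVec_div_le (hnonneg u) x
    _ = c * (2 * (x ⬝ᵥ x)) := by
        rw [← two_mul_dotProduct_weightedLap_mulVec hW, hx, dotProduct_smul, smul_eq_mul]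
        ring

theorem sum_mul_le_sum_of_sum_le_card {ι : Type*} [Fintype ι] {t d : ι → ℝ} {H : Finset ι}
    (ht : ∀ u, t u ∈ Set.Icc 0 1) (hsum : ∑ u, t u ≤ #H) (hd : ∀ u ∈ H, 0 ≤ d u)
    (hH : ∀ u ∈ H, ∀ v ∉ H, d v ≤ d u) : ∑ u, t u * d u ≤ ∑ u ∈ H, d u := by
  classical
  rcases H.eq_empty_or_nonempty with rfl | hne
  · have hzero : t = 0 := by
      rw [← Fintype.sum_eq_zero_iff_of_nonneg fun u ↦ (ht u).1]
      exact le_antisymm (by simpa using hsum) (sum_nonneg fun u _ ↦ (ht u).1)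
    simp [hzero]
  obtain ⟨w, hw, hmin⟩ := exists_min_image H d hne
  have hterm (u : ι) : t u * (d u - d w) ≤ if u ∈ H then d u - d w else 0 := by
    split_ifs with hu
    · exact mul_le_of_le_one_left (sub_nonneg.2 (hmin u hu)) (ht u).2
    · exact mul_nonpos_of_nonneg_of_nonpos (ht u).1 (sub_nonpos.2 (hH w hw u hu))
  calc ∑ u, t u * d u = ∑ u, t u * (d u - d w) + (∑ u, t u) * d w := by
        rw [sum_mul, ← sum_add_distrib]
        exact sum_congr rfl fun u _ ↦ by ring
    _ ≤ ∑ u ∈ H, (d u - d w) + #H * d w := by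
        refine add_le_add ((sum_le_sum fun u _ ↦ hterm u).trans_eq ?_)
          (mul_le_mul_of_nonneg_right hsum (hd w hw))
        simp
    _ = ∑ u ∈ H, d u := by simp

theorem sum_eigenvalues_weightedLap_le_sum_of_two_mul_card_le {W Φ : Matrix ι ι ℝ} {μ : ι → ℝ}
    (hW : W.IsSymm) (hnonneg : ∀ u v, 0 ≤ W u v) (h : IsSpectralDecomp (weightedLap W) Φ μ)
    {I H : Finset ι} (hcard : 2 * #I ≤ #H)
    (hH : ∀ u ∈ H, ∀ v ∉ H, ∑ w, W v w ≤ ∑ w, W u w) :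
    ∑ i ∈ I, μ i ≤ ∑ u ∈ H, ∑ v, W u v := by
  have hμ := h.eigenvalues_nonneg (weightedLap_nonneg hW hnonneg)
  have hdeg (u : ι) : 0 ≤ ∑ v, W u v := sum_nonneg fun v _ ↦ hnonneg u v
  set F : ι → ℝ := fun u ↦ ∑ i ∈ I, μ i * Φ u i ^ 2
  have hF (u : ι) : F u ∈ Set.Icc 0 (∑ v, W u v) := by
    have hterm (i : ι) : 0 ≤ μ i * Φ u i ^ 2 := mul_nonneg (hμ i) (sq_nonneg _)
    refine ⟨sum_nonneg fun i _ ↦ hterm i, ?_⟩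
    calc F u ≤ ∑ i, μ i * Φ u i ^ 2 :=
          sum_le_sum_of_subset_of_nonneg (subset_univ I) fun i _ _ ↦ hterm i
      _ = ∑ v, W u v - W u u := by simp [← h.apply_self, weightedLap, mulVec, dotProduct]
      _ ≤ ∑ v, W u v := sub_le_self _ (hnonneg u u)
  -- Relative to the degrees, every eigenvalue puts a total load of at most `2` on the vertices.
  have hsum : ∑ u, F u / ∑ v, W u v ≤ #H := by
    calc ∑ u, F u / ∑ v, W u v = ∑ i ∈ I, ∑ u, μ i * Φ.col i u ^ 2 / ∑ v, W u v := by
          rw [sum_comm]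
          exact sum_congr rfl fun u _ ↦ sum_div _ _ _
      _ ≤ ∑ i ∈ I, 2 := sum_le_sum fun i _ ↦ by
          simpa [h.col_dotProduct_col_self] using
            sum_sq_div_le_of_weightedLap_mulVec_eq_smul hW hnonneg (hμ i) (h.mulVec_col i)
      _ = (2 * #I : ℕ) := by simp [mul_comm]
      _ ≤ #H := mod_cast hcard
  calc ∑ i ∈ I, μ i = ∑ i ∈ I, μ i * (Φ.col i ⬝ᵥ Φ.col i) := by
        simp only [h.col_dotProduct_col_self, mul_one]
    _ = ∑ u, F u := by
        simp only [F, dotProduct, mul_sum, ← sq, col_apply]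
        exact sum_comm
    _ = ∑ u, F u / (∑ v, W u v) * ∑ v, W u v := sum_congr rfl fun u _ ↦
        (div_mul_cancel_of_imp fun h0 ↦ le_antisymm (h0 ▸ (hF u).2) (hF u).1).symm
    _ ≤ ∑ u ∈ H, ∑ v, W u v := sum_mul_le_sum_of_sum_le_card
        (fun u ↦ ⟨div_nonneg (hF u).1 (hdeg u), div_le_one_of_le₀ (hF u).2 (hdeg u)⟩) hsum
        (fun u _ ↦ hdeg u) hH

end DegreeBound

section Sorting

variable {n : ℕ} (f : Fin n → ℝ)

/-- The permutation listing the indices of `f` by decreasing value: it sends the 0-based position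
`i` to an index carrying the `(i + 1)`-st largest entry. -/
noncomputable def descPerm : Equiv.Perm (Fin n) := Fin.revPerm.trans (Tuple.sort f)

/-- The indices of the `m` largest entries of `f`, with ties broken by `descPerm`. It is everything
when `n ≤ m`. -/
noncomputable def topIndices (m : ℕ) : Finset (Fin n) := {u | ((descPerm f).symm u : ℕ) < m}

theorem ithLargest_succ (i : Fin n) : ithLargest f (i + 1) = f (descPerm f i) :=
  dif_pos ⟨i.1.succ_pos, i.2⟩

theorem antitone_comp_descPerm : Antitone (f ∘ descPerm f) := fun _ _ hij ↦
  Tuple.monotone_sort f (Fin.rev_le_rev.2 hij)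

theorem card_topIndices {m : ℕ} (hm : m ≤ n) : #(topIndices f m) = m := by
  have hmap : topIndices f m =
      ({i | (i : ℕ) < m} : Finset (Fin n)).map (descPerm f).toEmbedding := by
    ext u
    simp [topIndices, mem_map_equiv]
  rw [hmap, card_map, Fin.card_filter_val_lt, min_eq_right hm]

variable {f} in
theorem le_of_mem_topIndices_of_notMem {m : ℕ} {u v : Fin n} (hu : u ∈ topIndices f m)
    (hv : v ∉ topIndices f m) : f v ≤ f u := by
  simp only [topIndices, mem_filter_univ, not_lt] at hu hv
  simpa using antitone_comp_descPerm f (Fin.le_def.2 (hu.le.trans hv))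

theorem sum_Icc_ithLargest_eq_sum_filter (g : ℝ → ℝ) {a b : ℕ} (hb : b ≤ n) :
    ∑ i ∈ Icc (a + 1) b, g (ithLargest f i) =
      ∑ u with a ≤ ((descPerm f).symm u : ℕ) ∧ ((descPerm f).symm u : ℕ) < b, g (f u) := by
  symm
  refine sum_bij (fun u _ ↦ ((descPerm f).symm u : ℕ) + 1) (fun u hu ↦ ?_) (fun u _ v _ huv ↦ ?_)
    (fun i hi ↦ ?_) fun u _ ↦ by rw [ithLargest_succ, Equiv.apply_symm_apply]
  · rw [mem_filter_univ] at hu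
    exact mem_Icc.2 ⟨Nat.succ_le_succ hu.1, hu.2⟩
  · exact (descPerm f).symm.injective (Fin.ext (Nat.succ_injective huv))
  · rw [mem_Icc] at hi
    refine ⟨descPerm f ⟨i - 1, by lia⟩, ?_, ?_⟩
    · simp only [mem_filter_univ, Equiv.symm_apply_apply]
      lia
    · simp only [Equiv.symm_apply_apply]
      lia

theorem sum_Icc_one_ithLargest (g : ℝ → ℝ) {m : ℕ} (hm : m ≤ n) :
    ∑ i ∈ Icc 1 m, g (ithLargest f i) = ∑ u ∈ topIndices f m, g (f u) := by
  simpa [topIndices] using sum_Icc_ithLargest_eq_sum_filter f g (a := 0) hm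

theorem sum_Icc_succ_ithLargest (g : ℝ → ℝ) (m : ℕ) :
    ∑ i ∈ Icc (m + 1) n, g (ithLargest f i) = ∑ u ∈ (topIndices f m)ᶜ, g (f u) := by
  simpa [topIndices, compl_filter] using sum_Icc_ithLargest_eq_sum_filter f g (a := m) le_rfl

end Sorting

section Graph

variable {V : Type*} [Fintype V] [DecidableEq V] (G : SimpleGraph V) [DecidableRel G.Adj]

theorem weightedLap_adjMatrix : weightedLap (G.adjMatrix ℝ) = G.lapMatrix ℝ := by
  rw [weightedLap, SimpleGraph.lapMatrix, SimpleGraph.degMatrix]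
  congr 2
  ext v
  simp [SimpleGraph.adjMatrix_mulVec_apply]

theorem sum_adjMatrix_apply {V : Type*} [Fintype V] (G : SimpleGraph V) [DecidableRel G.Adj]
    (v : V) : ∑ w, G.adjMatrix ℝ v w = G.degree v := by
  simp [SimpleGraph.adjMatrix_apply, ← SimpleGraph.card_neighborFinset_eq_degree,
    SimpleGraph.neighborFinset_eq_filter]

theorem adjMatrix_mem_Icc {V : Type*} (G : SimpleGraph V) [DecidableRel G.Adj] (u v : V) :
    G.adjMatrix ℝ u v ∈ Set.Icc 0 1 := by
  rw [SimpleGraph.adjMatrix_apply]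
  split_ifs <;> simp

-- The Grone–Merris conjecture, proved by Bai.
theorem sum_eigenvalues_lapMatrix_le_sum_min_degree {Φ : Matrix V V ℝ} {μ : V → ℝ}
    (h : IsSpectralDecomp (G.lapMatrix ℝ) Φ μ) (I : Finset V) :
    ∑ i ∈ I, μ i ≤ ∑ v, min (G.degree v : ℝ) #I := by
  obtain ⟨P, hP, htrace, hsum⟩ := h.exists_mem_Icc_trace_eq I
  rw [← hsum, ← htrace, ← weightedLap_adjMatrix]
  simp only [← sum_adjMatrix_apply]
  exact trace_mul_weightedLap_le_sum_min G.isSymm_adjMatrix (adjMatrix_mem_Icc G) hP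

theorem sum_eigenvalues_lapMatrix_le_sum_degree {Φ : Matrix V V ℝ} {μ : V → ℝ}
    (h : IsSpectralDecomp (G.lapMatrix ℝ) Φ μ) {I H : Finset V} (hcard : 2 * #I ≤ #H)
    (hH : ∀ u ∈ H, ∀ v ∉ H, G.degree v ≤ G.degree u) :
    ∑ i ∈ I, μ i ≤ ∑ u ∈ H, (G.degree u : ℝ) := by
  rw [← weightedLap_adjMatrix] at h
  simp only [← sum_adjMatrix_apply]
  exact sum_eigenvalues_weightedLap_le_sum_of_two_mul_card_le G.isSymm_adjMatrix
    (fun u v ↦ (adjMatrix_mem_Icc G u v).1) h hcard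
    fun u hu v hv ↦ by simpa only [sum_adjMatrix_apply, Nat.cast_le] using hH u hu v hv

theorem sum_degree_add_sum_min_degree_eq (H : Finset V) (k : ℝ) :
    ∑ u ∈ H, (G.degree u : ℝ) + ∑ v, min (G.degree v : ℝ) k =
      2 * #G.edgeFinset + (∑ u ∈ H, min (G.degree u : ℝ) k -
        ∑ u ∈ Hᶜ, max 0 ((G.degree u : ℝ) - k)) := by
  have hmax (u : V) : max 0 ((G.degree u : ℝ) - k) = G.degree u - min (G.degree u : ℝ) k := by
    rw [← max_sub_sub_left, sub_self]
  have hedges : 2 * (#G.edgeFinset : ℝ) = ∑ u, (G.degree u : ℝ) :=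
    mod_cast G.sum_degrees_eq_twice_card_edges.symm
  rw [hedges, ← sum_add_sum_compl H fun u ↦ (G.degree u : ℝ),
    ← sum_add_sum_compl H fun u ↦ min (G.degree u : ℝ) k]
  simp only [hmax, sum_sub_distrib]
  ring

end Graph

/-- for a graph `G` on `n` vertices and `1 ≤ k ≤ (n-1)/2`,
`∑_{i=1}^k λ_i(L(G)) ≤ |E| + (1/2)(∑_{i=1}^{2k} min{d_i(G),k} − ∑_{i=2k+1}^{n} max{0, d_i(G)−k})`. -/
theorem sum_lapEigs_le_of_degrees {n : ℕ} (G : SimpleGraph (Fin n)) [DecidableRel G.Adj]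
    (k : ℕ) (hk1 : 1 ≤ k) (hk2 : k ≤ (n - 1) / 2) :
    ∑ i ∈ Finset.Icc 1 k, ithLargest (lapEigs G) i ≤
      (G.edgeFinset.card : ℝ) +
        (1 / 2) * ((∑ i ∈ Finset.Icc 1 (2 * k), min (ithLargest (degTuple G) i) (k : ℝ)) -
          ∑ i ∈ Finset.Icc (2 * k + 1) n, max 0 (ithLargest (degTuple G) i - (k : ℝ))) := by
  have h : IsSpectralDecomp (G.lapMatrix ℝ) _ (lapEigs G) :=
    isSpectralDecomp_eigenvectorUnitary (SimpleGraph.posSemidef_lapMatrix ℝ G).isHermitian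
  set I := topIndices (lapEigs G) k
  set H := topIndices (degTuple G) (2 * k)
  have hI : #I = k := card_topIndices _ (by lia)
  have hH : #H = 2 * k := card_topIndices _ (by lia)
  have hdegrees : ∑ i ∈ I, lapEigs G i ≤ ∑ u ∈ H, (G.degree u : ℝ) :=
    sum_eigenvalues_lapMatrix_le_sum_degree G h (by rw [hI, hH]) fun u hu v hv ↦
      Nat.cast_le.1 (le_of_mem_topIndices_of_notMem hu hv)
  have hmin : ∑ i ∈ I, lapEigs G i ≤ ∑ v, min (G.degree v : ℝ) k :=
    hI ▸ sum_eigenvalues_lapMatrix_le_sum_min_degree G h I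
  have hsum := sum_degree_add_sum_min_degree_eq G H k
  rw [sum_Icc_one_ithLargest _ (fun x ↦ x) (by lia : k ≤ n),
    sum_Icc_one_ithLargest _ (fun x ↦ min x (k : ℝ)) (by lia : 2 * k ≤ n),
    sum_Icc_succ_ithLargest _ fun x ↦ max 0 (x - (k : ℝ))]
  simp only [degTuple]
  linarith
end
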